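/- Entropy admissibility in the singular limit: let (η_k) be a sequence of positive numbers with η_k → 0, and for each k let q_k be a nonnegative bounded smooth classical solution of the η_k-nonlocal conservation law with the fixed initial datum q₀, satisfying the uniform bounds ‖q_k(t,·)‖_{L∞(ℝ)} ≤ 2‖q₀‖_{L∞(ℝ)} and sup_{t∈[0,T]} TV(E_k(t,·)) ≤ B for some B independent of k, where E_k(t,x) := (1/ν_k) ∫_x^∞ exp((x−y)/ν_k) q_k(t,y) dy with ν_k := −η_k/γ'(0). Suppose q* ∈ L∞((0,T)×ℝ) is such that for every compact K ⊂ ℝ, sup_{t∈[0,T]} ∫_K |E_k(t,x) − q*(t,x)| dx → 0 as k → ∞. Then q* satisfies the entropy inequality: for every convex α ∈ C²(ℝ), every β ∈ C¹(ℝ) with β'(s) = α'(s)(V(s) + s V'(s)), and every nonnegative φ ∈ C¹_c((−∞,T)×ℝ): ∬_{(0,T)×ℝ} [α(q*(t,x)) φ_t(t,x) + β(q*(t,x)) φ_x(t,x)] dx dt + ∫_ℝ α(q₀(x)) φ(0,x) dx ≥ 0. -/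

import Mathlib

/-!
Write `S f = cv (ek ν) f` for the average of `f` against the exponential kernel on `(0,∞)`. The
surrogate is `E = S q`, and `ν (S f)' = S f - f`, so `q = E - ν Eₓ`. With `F = V(W) q` the
conservation law becomes `Eₜ = (F - S F)/ν`, and it is on `E`, not on `q`, that the entropy
computation is made: only `E` has a variation bound that is uniform in `k`.

Split `F = V(E) q + R`. Let `P' = V`, `G' = s V'(s)`, so that `s V(s) = P(s) + G(s)` up to a constant.
Then `V(E) q = (P(E) - ν P(E)ₓ) + G(E)`, and since `S` inverts `1 - ν ∂ₓ`,
`(V(E) q - S(V(E) q))/ν = -P(E)ₓ + (G(E) - S G(E))/ν`. The second term has a sign after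
multiplication by `α'(E)`: because `α'` is nondecreasing and `G` is nonincreasing on `[0,∞)`, one has
`α'(E) (S G(E) - G(E)) ≥ S H(E) - H(E)` for `H' = α' G'` (`entropy_comparison`). The right-hand side
divided by `ν` is `(S H(E))ₓ`, which differs from `H(E)ₓ` by `O(ν TV(E))` in the weak sense, and
`α' P' + H' = β'`. The remainder contributes `α'(E) (S R)ₓ`; after an integration by parts it is bounded
by a multiple of `sup |S R| (1 + TV(E))`. This is `spatial_entropy`.

To see that `S R` is small, with `R = (V(W) - V(E)) q`, note that `W - E` is the convolution of
`q = E - ν Eₓ` with the difference of the two kernels. Moving a translation onto the variation of `E`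
bounds it in `L¹` by `TV(E)` times a first moment of that difference, and `S` maps `L¹` to
`L^∞` with norm `1/ν` (`averaged_commutator_le`). So it suffices that the first moment is `o(ν)`
near the origin and that the mass away from it vanishes; this is `Kernel.exists_approx`, a Laplace
type computation for `γ^{1/η}` at the length scale `ν = -η/γ'(0)`.

Since `deriv` is zero where a function is not differentiable, the conservation law is first turned into a
genuine derivative of the flux (`flux_hasDerivAt`), then integrated in time (`time_increment`,
`weak_of_spatial`), which gives an approximate entropy inequality for each `k` (`weak_nonlocal`). Its
defect tends to zero, and both sides pass to the limit by `tendsto_nonlinear` and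
`cv_ek_tendsto`.
-/

open MeasureTheory Real Set Filter Topology

/-- A nonlocal kernel `γ : [0,∞) → [0,∞)` with fixed support, together with its
(one-sided) derivative `dγ` and second derivative `ddγ` on a neighborhood `(0,δ)` of zero,
satisfying Assumption 2.2 of the paper. -/
structure Kernel where
  γ : ℝ → ℝ
  dγ : ℝ → ℝ
  ddγ : ℝ → ℝ
  δ : ℝ
  δ_pos : 0 < δ
  nonneg : ∀ x, 0 ≤ x → 0 ≤ γ x
  /-- `γ` is integrable on `(0,∞)` -/
  integrable : MeasureTheory.IntegrableOn γ (Set.Ioi 0)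
  /-- `γ` has finite total variation on `(0,∞)` -/
  bv : BoundedVariationOn γ (Set.Ioi 0)
  /-- `γ` is differentiable on `[0,δ)` (one-sided at `0`) with derivative `dγ` -/
  deriv_Ico : ∀ x ∈ Set.Ico 0 δ, HasDerivWithinAt γ (dγ x) (Set.Ici 0) x
  /-- `dγ` is differentiable on `(0,δ)` with derivative `ddγ` -/
  deriv2_Ioo : ∀ x ∈ Set.Ioo 0 δ, HasDerivWithinAt dγ (ddγ x) (Set.Ioo 0 δ) x
  /-- the second derivative is (essentially) bounded on `(0,δ)` -/
  ddγ_bdd : ∃ C, ∀ x ∈ Set.Ioo 0 δ, |ddγ x| ≤ C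
  /-- negative derivative at zero -/
  dγ0_neg : dγ 0 < 0
  /-- upper bound on `(δ,∞)`: values near zero dominate the tail -/
  upper : ∀ x ∈ Set.Ioo 0 δ, ∀ y, δ < y → γ y ≤ γ x
  /-- strict monotonicity on `(0,δ)` -/
  dγ_neg : ∀ x ∈ Set.Ioo 0 δ, dγ x < 0
  /-- normalization -/
  γ0 : γ 0 = 1

/-- The normalization constant `c_η = (∫₀^∞ γ(y)^{1/η} dy)⁻¹`. -/
noncomputable def Kernel.c (K : Kernel) (η : ℝ) : ℝ :=
  (∫ y in Set.Ioi (0:ℝ), K.γ y ^ (1/η))⁻¹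

/-- The scaled kernel `γ_η(x) = c_η γ(x)^{1/η}` (power scaling). -/
noncomputable def Kernel.γη (K : Kernel) (η x : ℝ) : ℝ := K.c η * K.γ x ^ (1/η)

/-- The (a.e.) derivative of the scaled kernel: `γ_η'(x) = c_η (1/η) γ(x)^{1/η-1} γ'(x)`. -/
noncomputable def Kernel.dγη (K : Kernel) (η x : ℝ) : ℝ :=
  K.c η * (1/η) * K.γ x ^ (1/η - 1) * K.dγ x

/-- Local absolute continuity of `γ` on `(0,∞)`: `γ` is a.e. differentiable with derivative
`dγ`, which is integrable with `∫₀^∞ |γ'| ≤ |γ|_{TV((0,∞))}`. -/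
def Kernel.AC (K : Kernel) : Prop :=
  (∀ᵐ x ∂(MeasureTheory.volume.restrict (Set.Ioi (0:ℝ))), HasDerivAt K.γ (K.dγ x) x) ∧
    MeasureTheory.IntegrableOn K.dγ (Set.Ioi 0) ∧
    (∫ x in Set.Ioi (0:ℝ), |K.dγ x|) ≤ (eVariationOn K.γ (Set.Ioi 0)).toReal

/-- The nonlocal operator `W[q,γ](x) = ∫_x^∞ γ(y-x) q(y) dy` (at fixed time). -/
noncomputable def Wop (γ : ℝ → ℝ) (q : ℝ → ℝ) (x : ℝ) : ℝ :=
  ∫ y in Set.Ioi x, γ (y - x) * q y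

/-- The exponential surrogate nonlocal term `E(x) = (1/ν) ∫_x^∞ exp((x-y)/ν) q(y) dy`. -/
noncomputable def Eop (ν : ℝ) (q : ℝ → ℝ) (x : ℝ) : ℝ :=
  (1/ν) * ∫ y in Set.Ioi x, Real.exp ((x - y)/ν) * q y

/-! ### One-sided averages and the exponential kernel -/

/-- One-sided averaging: `cv k f x = ∫₀^∞ k(z) f(x+z) dz`. -/
noncomputable def cv (k f : ℝ → ℝ) (x : ℝ) : ℝ := ∫ z in Ioi (0:ℝ), k z * f (x + z)

/-- The exponential kernel `z ↦ exp(-z/ν)/ν` of unit mass on `(0,∞)`. -/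
noncomputable def ek (ν z : ℝ) : ℝ := (1/ν) * Real.exp (-z/ν)

lemma setIntegral_Ioi_shift (g : ℝ → ℝ) (x : ℝ) :
    ∫ y in Ioi x, g y = ∫ z in Ioi (0:ℝ), g (x + z) := by
  have h := (measurePreserving_add_left (volume : Measure ℝ) x).setIntegral_preimage_emb
    (measurableEmbedding_addLeft x) g (Ioi x)
  rw [← h]
  congr 2
  ext z; simp

lemma ek_nonneg {ν : ℝ} (hν : 0 < ν) (z : ℝ) : 0 ≤ ek ν z := by
  unfold ek; positivity

lemma ek_continuous (ν : ℝ) : Continuous (ek ν) := by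
  unfold ek; fun_prop

lemma ek_integrable {ν : ℝ} (hν : 0 < ν) : IntegrableOn (ek ν) (Ioi 0) := by
  have h := (integrableOn_exp_mul_Ioi (a := -1/ν) (by
    rw [neg_div]; simpa using hν) 0).const_mul (1/ν)
  refine h.congr (ae_of_all _ fun z => ?_)
  simp only [ek]; congr 2; ring

lemma ek_integral {ν : ℝ} (hν : 0 < ν) : ∫ z in Ioi (0:ℝ), ek ν z = 1 := by
  have h := integral_exp_mul_Ioi (a := -1/ν) (by rw [neg_div]; simpa using hν) 0
  have h2 : ∀ z, ek ν z = (1/ν) * Real.exp (-1/ν*z) := by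
    intro z; simp only [ek]; congr 2; ring
  simp_rw [h2]
  rw [integral_const_mul, h]
  field_simp; simp

lemma continuous_kernel_integral {X : Type*} [TopologicalSpace X] [FirstCountableTopology X]
    {k : ℝ → ℝ} (hk : IntegrableOn k (Ioi 0)) {g : X → ℝ → ℝ}
    (hg : Continuous (fun p : X × ℝ => g p.1 p.2)) {M : ℝ} (hM : ∀ x z, |g x z| ≤ M) :
    Continuous fun x => ∫ z in Ioi (0:ℝ), k z * g x z := by
  refine continuous_of_dominated (bound := fun z => |k z| * M) ?_ ?_ (hk.abs.mul_const M) ?_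
  · intro x
    exact hk.aestronglyMeasurable.mul
      ((hg.comp (Continuous.prodMk_right x)).aestronglyMeasurable)
  · intro x
    refine ae_of_all _ fun z => ?_
    rw [norm_mul, Real.norm_eq_abs, Real.norm_eq_abs]
    exact mul_le_mul_of_nonneg_left (hM x z) (abs_nonneg _)
  · refine ae_of_all _ fun z => ?_
    exact continuous_const.mul (hg.comp (Continuous.prodMk_left z))

lemma cv_integrable {k : ℝ → ℝ} (hk : IntegrableOn k (Ioi 0)) {f : ℝ → ℝ} (hf : Continuous f)
    {M : ℝ} (hM : ∀ x, |f x| ≤ M) (x : ℝ) :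
    IntegrableOn (fun z => k z * f (x + z)) (Ioi 0) := by
  refine Integrable.mul_bdd (c := M) hk (by fun_prop) (ae_of_all _ fun z => ?_)
  exact hM _

lemma cv_continuous {k : ℝ → ℝ} (hk : IntegrableOn k (Ioi 0)) {f : ℝ → ℝ} (hf : Continuous f)
    {M : ℝ} (hM : ∀ x, |f x| ≤ M) : Continuous (cv k f) := by
  unfold cv
  exact continuous_kernel_integral hk (g := fun x z => f (x + z)) (by fun_prop) (M := M)
    (fun x z => hM _)

lemma cv_mono {k : ℝ → ℝ} (hk : IntegrableOn k (Ioi 0)) (hk0 : ∀ z ∈ Ioi (0:ℝ), 0 ≤ k z)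
    {f g : ℝ → ℝ} (hf : Continuous f) (hg : Continuous g)
    {M N : ℝ} (hM : ∀ x, |f x| ≤ M) (hN : ∀ x, |g x| ≤ N) (h : ∀ x, f x ≤ g x) (x : ℝ) :
    cv k f x ≤ cv k g x := by
  unfold cv
  refine setIntegral_mono_on (cv_integrable hk hf hM x) (cv_integrable hk hg hN x)
    measurableSet_Ioi fun z hz => ?_
  exact mul_le_mul_of_nonneg_left (h _) (hk0 z hz)

lemma cv_const {k : ℝ → ℝ} (h1 : ∫ z in Ioi (0:ℝ), k z = 1) (c x : ℝ) :
    cv k (fun _ => c) x = c := by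
  unfold cv
  rw [integral_mul_const, h1, one_mul]

lemma cv_abs_le {k : ℝ → ℝ} (hk : IntegrableOn k (Ioi 0)) (hk0 : ∀ z ∈ Ioi (0:ℝ), 0 ≤ k z)
    (h1 : ∫ z in Ioi (0:ℝ), k z = 1)
    {f : ℝ → ℝ} (hf : Continuous f) {M : ℝ} (hM : ∀ x, |f x| ≤ M) (x : ℝ) :
    |cv k f x| ≤ M := by
  rw [abs_le]
  constructor
  · rw [← cv_const h1 (-M) x]
    exact cv_mono hk hk0 continuous_const hf (N := M) (fun _ => le_rfl) hM
      (fun x => (abs_le.1 (hM x)).1) x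
  · conv_rhs => rw [← cv_const h1 M x]
    exact cv_mono hk hk0 hf continuous_const hM (fun _ => le_rfl)
      (fun x => (abs_le.1 (hM x)).2) x

lemma cv_mem {k : ℝ → ℝ} (hk : IntegrableOn k (Ioi 0)) (hk0 : ∀ z ∈ Ioi (0:ℝ), 0 ≤ k z)
    (h1 : ∫ z in Ioi (0:ℝ), k z = 1)
    {f : ℝ → ℝ} (hf : Continuous f) {M : ℝ} (hM : ∀ x, f x ∈ Icc 0 M) (x : ℝ) :
    cv k f x ∈ Icc 0 M := by
  have hb : ∀ x, |f x| ≤ M := fun x => abs_le.2 ⟨by linarith [(hM x).1, (hM x).2], (hM x).2⟩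
  refine ⟨?_, (abs_le.1 (cv_abs_le hk hk0 h1 hf hb x)).2⟩
  unfold cv
  exact setIntegral_nonneg measurableSet_Ioi fun z hz => mul_nonneg (hk0 z hz) (hM _).1

lemma cv_sub {k : ℝ → ℝ} (hk : IntegrableOn k (Ioi 0)) {f g : ℝ → ℝ} (hf : Continuous f)
    (hg : Continuous g) {M N : ℝ} (hM : ∀ x, |f x| ≤ M) (hN : ∀ x, |g x| ≤ N) (x : ℝ) :
    cv k (fun y => f y - g y) x = cv k f x - cv k g x := by
  unfold cv
  rw [← integral_sub (cv_integrable hk hf hM x) (cv_integrable hk hg hN x)]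
  simp only [mul_sub]

lemma cv_const_mul (k f : ℝ → ℝ) (c x : ℝ) :
    cv k (fun y => c * f y) x = c * cv k f x := by
  unfold cv
  rw [← integral_const_mul]
  congr 1; ext z; ring

lemma Wop_eq_cv' (k f : ℝ → ℝ) (x : ℝ) : (∫ y in Ioi x, k (y - x) * f y) = cv k f x := by
  rw [setIntegral_Ioi_shift]; simp [cv]

lemma Eop_eq_cv' (ν : ℝ) (f : ℝ → ℝ) (x : ℝ) :
    (1/ν) * (∫ y in Ioi x, Real.exp ((x - y)/ν) * f y) = cv (ek ν) f x := by
  rw [setIntegral_Ioi_shift, ← integral_const_mul]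
  unfold cv ek
  congr 1; ext z
  rw [show x - (x + z) = -z by ring]; ring

/-- The exponential average solves `ν (S f)' = S f - f`. -/
lemma cv_ek_hasDerivAt {ν : ℝ} (hν : 0 < ν) {f : ℝ → ℝ} (hf : Continuous f)
    {M : ℝ} (hM : ∀ x, |f x| ≤ M) (x : ℝ) :
    HasDerivAt (cv (ek ν) f) ((cv (ek ν) f x - f x)/ν) x := by
  have hfi : IntegrableOn (fun y => Real.exp (-y/ν) * f y) (Ioi 0) := by
    have h := cv_integrable (ek_integrable hν) hf hM 0
    refine (h.const_mul ν).congr (ae_of_all _ fun z => ?_)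
    simp only [ek, zero_add]; field_simp
  have hc : Continuous (fun y => Real.exp (-y/ν) * f y) := by fun_prop
  have key : ∀ x, cv (ek ν) f x = (1/ν) * Real.exp (x/ν) *
      ((∫ y in Ioi (0:ℝ), Real.exp (-y/ν) * f y) - ∫ y in (0:ℝ)..x, Real.exp (-y/ν) * f y) := by
    intro x
    have h2 : IntegrableOn (fun y => Real.exp (-y/ν) * f y) (Ioi x) := by
      rcases le_total 0 x with h | h
      · exact hfi.mono_set (Ioi_subset_Ioi h)
      · rw [← Ioc_union_Ioi_eq_Ioi h]
        exact (hc.integrableOn_Ioc).union hfi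
    rw [← Eop_eq_cv', intervalIntegral.integral_Ioi_sub_Ioi' hfi h2 |>.symm, sub_sub_cancel,
      mul_assoc (1/ν), ← integral_const_mul (Real.exp (x/ν))]
    refine congrArg (fun r => 1/ν * r) (integral_congr_ae (ae_of_all _ fun y => ?_))
    simp only
    rw [sub_div, sub_eq_add_neg, Real.exp_add, neg_div, mul_assoc]
  have hd : HasDerivAt (fun x => ∫ y in (0:ℝ)..x, Real.exp (-y/ν) * f y)
      (Real.exp (-x/ν) * f x) x :=
    intervalIntegral.integral_hasDerivAt_right (hc.intervalIntegrable _ _)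
      (hc.stronglyMeasurableAtFilter _ _) hc.continuousAt
  have he : HasDerivAt (fun x => (1/ν) * Real.exp (x/ν)) ((1/ν) * (Real.exp (x/ν) * (1/ν))) x :=
    (((hasDerivAt_id x).div_const ν).exp).const_mul _
  have := he.mul (hd.const_sub (∫ y in Ioi (0:ℝ), Real.exp (-y/ν) * f y))
  rw [show cv (ek ν) f = _ from funext key]
  refine this.congr_deriv ?_
  have h3 : Real.exp (x/ν) * Real.exp (-x/ν) = 1 := by
    rw [← Real.exp_add, neg_div]; simp
  linear_combination -(f x / ν) * h3

/-- `S` inverts `1 - ν ∂ₓ` on bounded functions: the difference `Z` of the two sides is bounded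
and solves `Z' = Z/ν`, so it vanishes. -/
lemma cv_ek_inv {ν : ℝ} (hν : 0 < ν) {f f' : ℝ → ℝ} (hf : ∀ x, HasDerivAt f (f' x) x)
    (hf' : Continuous f') {M N : ℝ} (hM : ∀ x, |f x| ≤ M) (hN : ∀ x, |f x - ν * f' x| ≤ N)
    (x : ℝ) : cv (ek ν) (fun y => f y - ν * f' y) x = f x := by
  have hfc : Continuous f := continuous_iff_continuousAt.2 fun x => (hf x).continuousAt
  have hgc : Continuous (fun y => f y - ν * f' y) := by fun_prop
  set Z : ℝ → ℝ := fun x => cv (ek ν) (fun y => f y - ν * f' y) x - f x with hZ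
  have hZd : ∀ x, HasDerivAt Z (Z x / ν) x := by
    intro x
    refine ((cv_ek_hasDerivAt hν hgc hN x).sub (hf x)).congr_deriv ?_
    simp only [hZ]; field_simp; ring
  have hQd : ∀ x, HasDerivAt (fun x => Z x * Real.exp (-x/ν)) 0 x := by
    intro x
    have he : HasDerivAt (fun x => Real.exp (-x/ν)) (Real.exp (-x/ν) * (-1/ν)) x :=
      (((hasDerivAt_id x).neg).div_const ν).exp
    refine ((hZd x).mul he).congr_deriv ?_
    ring
  have hconst : ∀ y, Z y * Real.exp (-y/ν) = Z x * Real.exp (-x/ν) := fun y =>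
    is_const_of_deriv_eq_zero (fun x => (hQd x).differentiableAt) (fun x => (hQd x).deriv) y x
  have hZb : ∀ y, |Z y| ≤ N + M := fun y => by
    have h1 := cv_abs_le (ek_integrable hν) (fun z _ => ek_nonneg hν z) (ek_integral hν) hgc hN y
    exact (abs_sub _ _).trans (add_le_add h1 (hM y))
  have hlim : Tendsto (fun y => Z y * Real.exp (-y/ν)) atTop (𝓝 0) := by
    have he : Tendsto (fun y => Real.exp (-y/ν)) atTop (𝓝 0) := by
      refine Real.tendsto_exp_atBot.comp ?_
      have : Tendsto (fun y:ℝ => y / ν) atTop atTop := tendsto_id.atTop_div_const hν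
      simpa only [neg_div, Function.comp_def] using tendsto_neg_atTop_atBot.comp this
    refine squeeze_zero_norm (a := fun y => (N + M) * Real.exp (-y/ν)) (fun y => ?_) (by simpa using he.const_mul (N+M))
    rw [norm_mul, Real.norm_eq_abs, Real.norm_eq_abs, abs_of_pos (Real.exp_pos _)]
    exact mul_le_mul_of_nonneg_right (hZb y) (Real.exp_pos _).le
  have h0 : Z x * Real.exp (-x/ν) = 0 :=
    tendsto_nhds_unique (by simp only [hconst]; exact tendsto_const_nhds) hlim
  have : Z x = 0 := by
    rcases mul_eq_zero.1 h0 with h | h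
    · exact h
    · exact absurd h (Real.exp_pos _).ne'
  simpa [hZ, sub_eq_zero] using this

/-! ### Total variation of differentiable functions -/

lemma sum_lintegral_le {μ : Measure ℝ} (g : ℕ → ℝ → ENNReal) (n : ℕ) :
    ∑ i ∈ Finset.range n, ∫⁻ x, g i x ∂μ ≤ ∫⁻ x, ∑ i ∈ Finset.range n, g i x ∂μ := by
  induction n with
  | zero => simp
  | succ n ih =>
    simp only [Finset.sum_range_succ]
    exact (add_le_add ih le_rfl).trans (le_lintegral_add _ _)

/-- `∫ |f(x+h) - f(x)| dx ≤ h · TV(f)`: cut the half-line into cells of length `h`; for a point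
`x` of the first cell the increments along `x, x+h, x+2h, …` add up to at most `TV(f)`. -/
lemma lintegral_shift_le (f : ℝ → ℝ) (a : ℝ) {h : ℝ} (hh : 0 < h) :
    ∫⁻ x in Ioi a, ‖f (x + h) - f x‖ₑ ≤ ENNReal.ofReal h * eVariationOn f (Ioi a) := by
  have hU : Ioi a = ⋃ n : ℕ, Ioc (a + n * h) (a + (n+1:ℕ) * h) := by
    ext x
    simp only [mem_Ioi, mem_iUnion, mem_Ioc]
    constructor
    · intro hx
      have h0 : 0 < (x - a)/h := div_pos (sub_pos.2 hx) hh
      have hc : 0 < ⌈(x-a)/h⌉₊ := Nat.ceil_pos.2 h0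
      obtain ⟨n, hn⟩ := Nat.exists_eq_succ_of_ne_zero hc.ne'
      refine ⟨n, ?_, ?_⟩
      · have : (n:ℝ) < (x-a)/h := Nat.lt_ceil.1 (by omega)
        rw [lt_div_iff₀ hh] at this; linarith
      · have : (x-a)/h ≤ (n+1:ℕ) := by rw [← Nat.succ_eq_add_one, ← hn]; exact Nat.le_ceil _
        rw [div_le_iff₀ hh] at this; linarith
    · rintro ⟨n, h1, -⟩
      have : 0 ≤ (n:ℝ) * h := by positivity
      linarith
  have hmono : Monotone (fun n : ℕ => a + n * h) := fun m n hmn => by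
    have : (m:ℝ) ≤ n := by exact_mod_cast hmn
    have := mul_le_mul_of_nonneg_right this hh.le
    simp only; linarith
  have hdisj : Pairwise (Function.onFun Disjoint fun n : ℕ => Ioc (a + n * h) (a + (n+1:ℕ) * h)) := by
    have := hmono.pairwise_disjoint_on_Ioc_succ
    exact this
  have hcell : ∀ n : ℕ, ∫⁻ x in Ioc (a + n * h) (a + (n+1:ℕ) * h), ‖f (x + h) - f x‖ₑ
      = ∫⁻ x in Ioc a (a + h), ‖f (x + (n+1:ℕ) * h) - f (x + n * h)‖ₑ := by
    intro n
    have := (measurePreserving_add_right (volume : Measure ℝ) (n * h)).setLIntegral_comp_preimage_emb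
      (measurableEmbedding_addRight (n*h)) (fun x => ‖f (x + h) - f x‖ₑ)
      (Ioc (a + n * h) (a + (n+1:ℕ) * h))
    rw [← this]
    have hs : (fun x => x + (n:ℝ) * h) ⁻¹' Ioc (a + n * h) (a + (n+1:ℕ) * h) = Ioc a (a + h) := by
      ext x; simp only [mem_preimage, mem_Ioc]; push_cast
      constructor <;> rintro ⟨h1, h2⟩ <;> constructor <;> linarith
    rw [hs]
    congr 1; ext x
    rw [show x + (n:ℝ) * h + h = x + (n+1:ℕ) * h by push_cast; ring]
  conv_lhs => rw [hU]
  rw [lintegral_iUnion (fun n => measurableSet_Ioc) hdisj]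
  simp only [hcell]
  refine ENNReal.tsum_le_of_sum_range_le fun n => ?_
  refine (sum_lintegral_le _ n).trans ?_
  calc _ ≤ ∫⁻ x in Ioc a (a + h), eVariationOn f (Ioi a) := by
        refine setLIntegral_mono measurable_const fun x hx => ?_
        have := eVariationOn.sum_le (f := f) (s := Ioi a) (n := n) (u := fun i : ℕ => x + i * h)
          (fun m n hmn => by
            have : (m:ℝ) ≤ n := by exact_mod_cast hmn
            have := mul_le_mul_of_nonneg_right this hh.le
            simp only; linarith)
          (fun i => by
            have : 0 ≤ (i:ℝ) * h := by positivity
            exact lt_of_lt_of_le hx.1 (by linarith))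
        simpa only [edist_eq_enorm_sub] using this
    _ = _ := by
        rw [setLIntegral_const, Real.volume_Ioc, add_sub_cancel_left, mul_comm]

/-- For a `C¹` function, `∫ |f'| ≤ TV(f)`: Fatou's lemma on difference quotients. -/
lemma lintegral_deriv_le {f f' : ℝ → ℝ} (hf : ∀ x, HasDerivAt f (f' x) x) (a : ℝ) :
    ∫⁻ x in Ioi a, ‖f' x‖ₑ ≤ eVariationOn f (Ioi a) := by
  have hfc : Continuous f := continuous_iff_continuousAt.2 fun x => (hf x).continuousAt
  have hlim : ∀ x, Tendsto (fun n : ℕ => ‖((n:ℝ)+1) * (f (x + 1/((n:ℝ)+1)) - f x)‖ₑ) atTop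
      (𝓝 ‖f' x‖ₑ) := by
    intro x
    refine (continuous_enorm.tendsto _).comp ?_
    have h1 := (hasDerivAt_iff_tendsto_slope_zero.1 (hf x))
    have h2 : Tendsto (fun n : ℕ => 1/((n:ℝ)+1)) atTop (𝓝[≠] 0) :=
      tendsto_nhdsWithin_iff.2 ⟨tendsto_one_div_add_atTop_nhds_zero_nat,
        Eventually.of_forall fun n => by
          have : (0:ℝ) < 1/((n:ℝ)+1) := by positivity
          exact this.ne'⟩
    refine (h1.comp h2).congr fun n => ?_
    simp [Function.comp]
  calc ∫⁻ x in Ioi a, ‖f' x‖ₑ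
      = ∫⁻ x in Ioi a, liminf (fun n : ℕ => ‖((n:ℝ)+1) * (f (x + 1/((n:ℝ)+1)) - f x)‖ₑ) atTop := by
        congr 1; ext x; exact (hlim x).liminf_eq.symm
    _ ≤ liminf (fun n : ℕ => ∫⁻ x in Ioi a, ‖((n:ℝ)+1) * (f (x + 1/((n:ℝ)+1)) - f x)‖ₑ) atTop := by
        refine lintegral_liminf_le fun n => ?_
        fun_prop
    _ ≤ liminf (fun n : ℕ => eVariationOn f (Ioi a)) atTop := by
        refine liminf_le_liminf (Eventually.of_forall fun n => ?_)
        have hp : (0:ℝ) < 1/((n:ℝ)+1) := by positivity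
        have := lintegral_shift_le f a hp
        simp only [enorm_mul]
        rw [lintegral_const_mul _ (by fun_prop)]
        refine (mul_le_mul_right this _).trans ?_
        rw [← mul_assoc]
        have : ‖(n:ℝ)+1‖ₑ * ENNReal.ofReal (1/((n:ℝ)+1)) = 1 := by
          rw [Real.enorm_eq_ofReal (by positivity), ← ENNReal.ofReal_mul (by positivity)]
          rw [mul_one_div_cancel (by positivity)]; simp
        rw [this, one_mul]
    _ = _ := by simp

lemma integral_abs_deriv_le {f f' : ℝ → ℝ} (hf : ∀ x, HasDerivAt f (f' x) x) (hf' : Continuous f')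
    {B : ℝ} (hB0 : 0 ≤ B) (hB : eVariationOn f univ ≤ ENNReal.ofReal B) {a b : ℝ} (hab : a ≤ b) :
    ∫ x in a..b, |f' x| ≤ B := by
  rw [intervalIntegral.integral_of_le hab]
  have h1 : ∫ x in Ioc a b, |f' x| = (∫⁻ x in Ioc a b, ‖f' x‖ₑ).toReal := by
    simpa using integral_norm_eq_lintegral_enorm (μ := volume.restrict (Ioc a b))
      hf'.aestronglyMeasurable
  rw [h1]
  refine ENNReal.toReal_le_of_le_ofReal hB0 ?_
  calc _ ≤ ∫⁻ x in Ioi a, ‖f' x‖ₑ := lintegral_mono_set Ioc_subset_Ioi_self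
    _ ≤ _ := lintegral_deriv_le hf a
    _ ≤ _ := (eVariationOn.mono f (subset_univ _)).trans hB

/-! ### The entropy balance at a fixed time -/

/-- Kruzhkov-type comparison: if `α'` is nondecreasing, `G' ≤ 0` and `H' = α' G'`, then
`H(b) - H(a) ≤ α'(a) (G(b) - G(a))`. -/
lemma entropy_comparison {α' G H g : ℝ → ℝ} (hα : Monotone α') (hg : ∀ s, 0 ≤ s → g s ≤ 0)
    (hG : ∀ s, HasDerivAt G (g s) s) (hH : ∀ s, HasDerivAt H (α' s * g s) s) {a b : ℝ}
    (ha : 0 ≤ a) (hb : 0 ≤ b) : H b - H a ≤ α' a * (G b - G a) := by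
  have hd : ∀ s, HasDerivAt (fun s => H s - α' a * G s) (α' s * g s - α' a * g s) s :=
    fun s => (hH s).sub ((hG s).const_mul _)
  have hc : Continuous (fun s => H s - α' a * G s) :=
    continuous_iff_continuousAt.2 fun x => (hd x).continuousAt
  rcases le_total a b with hab | hab
  · have : AntitoneOn (fun s => H s - α' a * G s) (Icc a b) := by
      refine antitoneOn_of_deriv_nonpos (convex_Icc a b) hc.continuousOn
        (fun s _ => (hd s).differentiableAt.differentiableWithinAt) fun s hs => ?_
      rw [interior_Icc] at hs
      rw [(hd s).deriv]
      nlinarith [hα hs.1.le, hg s (ha.trans hs.1.le)]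
    have := this (left_mem_Icc.2 hab) (right_mem_Icc.2 hab) hab
    simp only at this
    linarith
  · have : MonotoneOn (fun s => H s - α' a * G s) (Icc b a) := by
      refine monotoneOn_of_deriv_nonneg (convex_Icc b a) hc.continuousOn
        (fun s _ => (hd s).differentiableAt.differentiableWithinAt) fun s hs => ?_
      rw [interior_Icc] at hs
      rw [(hd s).deriv]
      nlinarith [hα hs.2.le, hg s (hb.trans hs.1.le)]
    have := this (left_mem_Icc.2 hab) (right_mem_Icc.2 hab) hab
    simp only at this
    linarith

lemma exists_bound_Icc {f : ℝ → ℝ} (hf : Continuous f) (a b : ℝ) :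
    ∃ C, 0 ≤ C ∧ ∀ s ∈ Icc a b, |f s| ≤ C := by
  obtain ⟨C, hC⟩ := (isCompact_Icc (a := a) (b := b)).exists_bound_of_continuousOn hf.continuousOn
  exact ⟨max C 0, le_max_right _ _, fun s hs => (hC s hs).trans (le_max_left _ _)⟩

/-- The entropy balance at a fixed time. With `E = S q` and `R = F - V(E) q`, the entropy
production is a total derivative plus terms controlled by `ν` and `sup |S R|`. -/
lemma spatial_entropy {ν : ℝ} (hν : 0 < ν) {q F : ℝ → ℝ} (hq : Continuous q) (hF : Continuous F)
    {M CF : ℝ} (hqM : ∀ x, q x ∈ Icc 0 M) (hFb : ∀ x, |F x| ≤ CF)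
    {B : ℝ} (hB0 : 0 ≤ B) (hB : eVariationOn (cv (ek ν) q) univ ≤ ENNReal.ofReal B)
    {V : ℝ → ℝ} (hV : ContDiff ℝ 1 V) (hV' : ∀ s, deriv V s ≤ 0)
    {α β : ℝ → ℝ} (hα : ContDiff ℝ 2 α) (hαc : ConvexOn ℝ univ α) (hβ : ContDiff ℝ 1 β)
    (hβd : ∀ s, deriv β s = deriv α s * (V s + s * deriv V s))
    {A1 A2 LH : ℝ} (hA1 : ∀ s ∈ Icc 0 M, |deriv α s| ≤ A1)
    (hA2 : ∀ s ∈ Icc 0 M, |deriv (deriv α) s| ≤ A2)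
    (hLH : ∀ s ∈ Icc 0 M, |deriv α s * (s * deriv V s)| ≤ LH)
    {ε : ℝ} (hε : ∀ x, |cv (ek ν) (fun y => F y - V (cv (ek ν) q y) * q y) x| ≤ ε)
    {ψ ψ' : ℝ → ℝ} (hψ : ∀ x, HasDerivAt ψ (ψ' x) x) (hψ'c : Continuous ψ')
    {Φ Φ' : ℝ} (hψ0 : ∀ x, 0 ≤ ψ x) (hψΦ : ∀ x, ψ x ≤ Φ) (hψ' : ∀ x, |ψ' x| ≤ Φ')
    {a : ℝ} (ha : 0 < a) (hψa : ψ a = 0) (hψa' : ψ (-a) = 0) :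
    -(Φ' * LH * ν * (B + M) + ε * (2 * a * Φ' * A1 + Φ * A2 * B)) ≤
      ∫ x in (-a)..a, (β (cv (ek ν) q x) * ψ' x
        - ψ x * deriv α (cv (ek ν) q x) * ((F x - cv (ek ν) F x)/ν)) := by
  -- elementary regularity of `E = S q`
  have hqb : ∀ x, |q x| ≤ M := fun x => abs_le.2 ⟨by linarith [(hqM x).1, (hqM x).2], (hqM x).2⟩
  have hM0 : 0 ≤ M := (hqM 0).1.trans (hqM 0).2
  have hki := ek_integrable hν
  have hk0 : ∀ z ∈ Ioi (0:ℝ), 0 ≤ ek ν z := fun z _ => ek_nonneg hν z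
  have hk1 := ek_integral hν
  set E := cv (ek ν) q with hE
  have hEM : ∀ x, E x ∈ Icc 0 M := cv_mem hki hk0 hk1 hq hqM
  have hEd : ∀ x, HasDerivAt E ((E x - q x)/ν) x := cv_ek_hasDerivAt hν hq hqb
  have hEc : Continuous E := cv_continuous hki hq hqb
  have hVc : Continuous V := hV.continuous
  have hV'c : Continuous (deriv V) := hV.continuous_deriv le_rfl
  have hVd : ∀ s, HasDerivAt V (deriv V s) s := fun s =>
    (hV.differentiable one_ne_zero s).hasDerivAt
  have hαd : ∀ s, HasDerivAt α (deriv α s) s := fun s =>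
    (hα.differentiable two_ne_zero s).hasDerivAt
  have hα1 : ContDiff ℝ 1 (deriv α) := by
    have : ContDiff ℝ (1+1) α := by norm_num; exact hα
    exact (contDiff_succ_iff_deriv.1 this).2.2
  have hα'c : Continuous (deriv α) := hα1.continuous
  have hα''c : Continuous (deriv (deriv α)) := hα1.continuous_deriv le_rfl
  have hα'd : ∀ s, HasDerivAt (deriv α) (deriv (deriv α) s) s := fun s =>
    (hα1.differentiable one_ne_zero s).hasDerivAt
  have hβc := hβ.continuous
  have hβd' : ∀ s, HasDerivAt β (deriv α s * (V s + s * deriv V s)) s := fun s => by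
    rw [← hβd]; exact (hβ.differentiable one_ne_zero s).hasDerivAt
  have hα'mono : Monotone (deriv α) := by
    have := hαc.monotoneOn_deriv (fun s _ => (hαd s).differentiableAt)
    exact monotoneOn_univ.1 this
  -- primitives of `V`, of `s ↦ s V' s` and of `s ↦ α' s (s V' s)`
  set VV : ℝ → ℝ := fun s => ∫ r in (0:ℝ)..s, V r with hVV
  have hVVd : ∀ s, HasDerivAt VV (V s) s := fun s =>
    intervalIntegral.integral_hasDerivAt_right (hVc.intervalIntegrable _ _)
      (hVc.stronglyMeasurableAtFilter _ _) hVc.continuousAt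
  set G : ℝ → ℝ := fun s => s * V s - VV s with hG
  have hGd : ∀ s, HasDerivAt G (s * deriv V s) s := fun s => by
    refine (((hasDerivAt_id s).mul (hVd s)).sub (hVVd s)).congr_deriv ?_
    simp
  have hhc : Continuous (fun s => deriv α s * (s * deriv V s)) := by fun_prop
  set H : ℝ → ℝ := fun s => ∫ r in (0:ℝ)..s, deriv α r * (r * deriv V r) with hH
  have hHd : ∀ s, HasDerivAt H (deriv α s * (s * deriv V s)) s := fun s =>
    intervalIntegral.integral_hasDerivAt_right (hhc.intervalIntegrable _ _)
      (hhc.stronglyMeasurableAtFilter _ _) hhc.continuousAt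
  have cont_of : ∀ {f f' : ℝ → ℝ}, (∀ s, HasDerivAt f (f' s) s) → Continuous f := fun h =>
    continuous_iff_continuousAt.2 fun x => (h x).continuousAt
  have hVVc := cont_of hVVd
  have hGc := cont_of hGd
  have hHc := cont_of hHd
  have bnd : ∀ {f : ℝ → ℝ}, Continuous f → ∃ C, 0 ≤ C ∧ ∀ x, |f (E x)| ≤ C := fun hf => by
    obtain ⟨C, h0, hC⟩ := exists_bound_Icc hf 0 M
    exact ⟨C, h0, fun x => hC _ (hEM x)⟩
  obtain ⟨CV, hCV0, hCV⟩ := bnd hVc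
  obtain ⟨CVV, -, hCVV⟩ := bnd hVVc
  obtain ⟨CG, -, hCG⟩ := bnd hGc
  obtain ⟨CH, -, hCH⟩ := bnd hHc
  have hLH0 : 0 ≤ LH := (abs_nonneg _).trans (hLH 0 ⟨le_rfl, hM0⟩)
  have hA10 : 0 ≤ A1 := (abs_nonneg _).trans (hA1 0 ⟨le_rfl, hM0⟩)
  have hA20 : 0 ≤ A2 := (abs_nonneg _).trans (hA2 0 ⟨le_rfl, hM0⟩)
  have hΦ0 : 0 ≤ Φ := (hψ0 0).trans (hψΦ 0)
  have hΦ'0 : 0 ≤ Φ' := (abs_nonneg _).trans (hψ' 0)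
  have hε0 : 0 ≤ ε := (abs_nonneg _).trans (hε 0)
  have hVq : ∀ x, |V (E x) * q x| ≤ CV * M := fun x => by
    rw [abs_mul]; exact mul_le_mul (hCV x) (hqb x) (abs_nonneg _) hCV0
  set R : ℝ → ℝ := fun y => F y - V (E y) * q y with hR
  have hRc : Continuous R := by fun_prop
  have hRb : ∀ x, |R x| ≤ CF + CV * M := fun x =>
    (abs_sub _ _).trans (add_le_add (hFb x) (hVq x))
  -- the averaged local flux: `S (V(E) q) = S (G(E)) + VV(E)`
  have hS1 : ∀ x, cv (ek ν) (fun y => V (E y) * q y) x = cv (ek ν) (fun y => G (E y)) x + VV (E x) := by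
    intro x
    have h1 := cv_ek_inv hν (f := fun y => VV (E y)) (f' := fun y => V (E y) * ((E y - q y)/ν))
      (fun x => (hVVd (E x)).comp x (hEd x)) (by fun_prop) (M := CVV) (N := CV * M + CG) hCVV
      (fun x => by
        have : VV (E x) - ν * (V (E x) * ((E x - q x)/ν)) = V (E x) * q x - G (E x) := by
          simp only [hG]; field_simp; ring
        rw [this]
        exact (abs_sub _ _).trans (add_le_add (hVq x) (hCG x))) x
    have h2 : (fun y => VV (E y) - ν * (V (E y) * ((E y - q y)/ν))) =
        fun y => V (E y) * q y - G (E y) := by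
      ext y; simp only [hG]; field_simp; ring
    rw [h2, cv_sub hki (by fun_prop) (by fun_prop) hVq hCG] at h1
    linarith
  have hSF : ∀ x, cv (ek ν) F x = cv (ek ν) R x + cv (ek ν) (fun y => G (E y)) x + VV (E x) := by
    intro x
    have := cv_sub hki hF (by fun_prop : Continuous fun y => V (E y) * q y) hFb hVq x
    rw [hS1] at this
    simp only [hR]; linarith
  -- comparison inequality for the averages
  have hcomp : ∀ x, cv (ek ν) (fun y => H (E y)) x - H (E x) ≤
      deriv α (E x) * (cv (ek ν) (fun y => G (E y)) x - G (E x)) := by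
    intro x
    have h1 := cv_mono hki hk0 (f := fun y => H (E y) - H (E x))
      (g := fun y => deriv α (E x) * (G (E y) - G (E x))) (by fun_prop) (by fun_prop)
      (M := CH + CH) (N := A1 * (CG + CG))
      (fun y => (abs_sub _ _).trans (add_le_add (hCH y) (hCH x)))
      (fun y => by
        rw [abs_mul]
        exact mul_le_mul (hA1 _ (hEM x)) ((abs_sub _ _).trans (add_le_add (hCG y) (hCG x)))
          (abs_nonneg _) hA10)
      (fun y => entropy_comparison hα'mono (fun s hs => mul_nonpos_of_nonneg_of_nonpos hs (hV' s))
        hGd hHd (hEM x).1 (hEM y).1) x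
    rw [cv_const_mul, cv_sub hki (by fun_prop) continuous_const hCH (fun _ => hCH x),
      cv_sub hki (by fun_prop) continuous_const hCG (fun _ => hCG x), cv_const hk1,
      cv_const hk1] at h1
    exact h1
  -- derivative of the averages
  have hSRd : ∀ x, HasDerivAt (cv (ek ν) R) ((cv (ek ν) R x - R x)/ν) x :=
    cv_ek_hasDerivAt hν hRc hRb
  have hSRc := cv_continuous hki hRc hRb
  have hHEc : Continuous (fun y => H (E y)) := by fun_prop
  have hSHd : ∀ x, HasDerivAt (cv (ek ν) (fun y => H (E y)))
      ((cv (ek ν) (fun y => H (E y)) x - H (E x))/ν) x := cv_ek_hasDerivAt hν hHEc hCH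
  have hSHc := cv_continuous hki hHEc hCH
  have hSFc := cv_continuous hki hF hFb
  -- the total derivative
  set Q : ℝ → ℝ := fun x => ψ x * (β (E x) + cv (ek ν) (fun y => H (E y)) x - H (E x)
    + deriv α (E x) * cv (ek ν) R x) with hQ
  set Q' : ℝ → ℝ := fun x => ψ' x * (β (E x) + cv (ek ν) (fun y => H (E y)) x - H (E x)
    + deriv α (E x) * cv (ek ν) R x) + ψ x * (
      deriv α (E x) * (V (E x) + E x * deriv V (E x)) * ((E x - q x)/ν)
      + (cv (ek ν) (fun y => H (E y)) x - H (E x))/ν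
      - deriv α (E x) * (E x * deriv V (E x)) * ((E x - q x)/ν)
      + (deriv (deriv α) (E x) * ((E x - q x)/ν) * cv (ek ν) R x
        + deriv α (E x) * ((cv (ek ν) R x - R x)/ν))) with hQ'
  have hQd : ∀ x, HasDerivAt Q (Q' x) x := by
    intro x
    exact (hψ x).mul (((((hβd' (E x)).comp x (hEd x)).add (hSHd x)).sub
      ((hHd (E x)).comp x (hEd x))).add (((hα'd (E x)).comp x (hEd x)).mul (hSRd x)))
  have hψc := cont_of hψ
  have hQ'c : Continuous Q' := by fun_prop
  have hQint : ∫ x in (-a)..a, Q' x = 0 := by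
    rw [intervalIntegral.integral_eq_sub_of_hasDerivAt (fun x _ => hQd x)
      (hQ'c.intervalIntegrable _ _)]
    simp [hQ, hψa, hψa']
  -- `SH - H` is controlled by the average of `|ν Eₓ|`
  set D : ℝ → ℝ := fun x => |(E x - q x)/ν| with hD
  have hDc : Continuous D := by fun_prop
  have hDb : ∀ x, |D x| ≤ M/ν := fun x => by
    simp only [hD, abs_abs, abs_div, abs_of_pos hν]
    refine div_le_div_of_nonneg_right ?_ hν.le
    rw [abs_le]
    constructor <;> linarith [(hEM x).1, (hEM x).2, (hqM x).1, (hqM x).2]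
  have hSDc := cv_continuous hki hDc hDb
  have hSH : ∀ x, |cv (ek ν) (fun y => H (E y)) x - H (E x)| ≤ LH * ν * cv (ek ν) D x := by
    intro x
    have hbd : ∀ y, |deriv α (E y) * (E y * deriv V (E y)) * ((E y - q y)/ν)| ≤ LH * D y := by
      intro y
      rw [abs_mul]
      exact mul_le_mul_of_nonneg_right (hLH _ (hEM y)) (abs_nonneg _)
    have hbd' : ∀ y, |ν * (deriv α (E y) * (E y * deriv V (E y)) * ((E y - q y)/ν))|
        ≤ (LH * ν) * D y := by
      intro y
      rw [abs_mul, abs_of_pos hν]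
      nlinarith [hbd y]
    have hbd2 : ∀ y, |ν * (deriv α (E y) * (E y * deriv V (E y)) * ((E y - q y)/ν))|
        ≤ (LH * ν) * (M/ν) := fun y => (hbd' y).trans
      (mul_le_mul_of_nonneg_left ((le_abs_self _).trans (hDb y)) (by positivity))
    have h1 := cv_ek_inv hν (f := fun y => H (E y))
      (f' := fun y => deriv α (E y) * (E y * deriv V (E y)) * ((E y - q y)/ν))
      (fun x => (hHd (E x)).comp x (hEd x)) (by fun_prop) (M := CH) (N := CH + (LH * ν) * (M/ν))
      hCH (fun y => (abs_sub _ _).trans (add_le_add (hCH y) (hbd2 y))) x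
    rw [cv_sub hki hHEc (by fun_prop) hCH hbd2] at h1
    have h2 : cv (ek ν) (fun y => H (E y)) x - H (E x) = cv (ek ν)
      (fun y => ν * (deriv α (E y) * (E y * deriv V (E y)) * ((E y - q y)/ν))) x := by linarith
    rw [h2, abs_le, ← cv_const_mul]
    have hDb2 : ∀ y, |LH * ν * D y| ≤ LH * ν * (M/ν) := fun y => by
      rw [abs_mul, abs_of_nonneg (by positivity : 0 ≤ LH * ν)]
      exact mul_le_mul_of_nonneg_left (hDb y) (by positivity)
    constructor
    · have := cv_mono hki hk0 (f := fun y => (-1) * (LH * ν * D y)) (by fun_prop) (by fun_prop)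
        (M := LH * ν * (M/ν)) (fun y => by simpa using hDb2 y) hbd2
        (fun y => by linarith [(abs_le.1 (hbd' y)).1]) x
      rw [cv_const_mul] at this
      linarith
    · exact cv_mono hki hk0 (by fun_prop) (by fun_prop) hbd2 hDb2 (fun y => (abs_le.1 (hbd' y)).2) x
  have hDint : ∫ x in (-a)..a, D x ≤ B :=
    integral_abs_deriv_le hEd (by fun_prop) hB0 hB (by linarith)
  have hSDint : ∫ x in (-a)..a, cv (ek ν) D x ≤ B + M := by
    have h1 : ∫ x in (-a)..a, (cv (ek ν) D x - D x)/ν = cv (ek ν) D a - cv (ek ν) D (-a) :=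
      intervalIntegral.integral_eq_sub_of_hasDerivAt
        (fun x _ => cv_ek_hasDerivAt hν hDc hDb x)
        ((by fun_prop : Continuous fun x => (cv (ek ν) D x - D x)/ν).intervalIntegrable _ _)
    rw [intervalIntegral.integral_div, intervalIntegral.integral_sub
      (hSDc.intervalIntegrable _ _) (hDc.intervalIntegrable _ _), div_eq_iff hν.ne'] at h1
    have h2 : cv (ek ν) D a ≤ M/ν := (le_abs_self _).trans (cv_abs_le hki hk0 hk1 hDc hDb a)
    have h3 : 0 ≤ cv (ek ν) D (-a) := by
      unfold cv
      exact setIntegral_nonneg measurableSet_Ioi fun z hz => mul_nonneg (hk0 z hz) (abs_nonneg _)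
    have h4 : cv (ek ν) D a * ν ≤ M := by rwa [le_div_iff₀ hν] at h2
    nlinarith
  -- pointwise lower bound
  have hpt : ∀ x ∈ Icc (-a) a, Q' x - (Φ' * (LH * ν) * cv (ek ν) D x + ε * (Φ' * A1)
        + ε * (Φ * A2) * D x) ≤
      β (E x) * ψ' x - ψ x * deriv α (E x) * ((F x - cv (ek ν) F x)/ν) := by
    intro x _
    have e1 : (F x - cv (ek ν) F x)/ν = (R x - cv (ek ν) R x)/ν
        - (cv (ek ν) (fun y => G (E y)) x - G (E x))/ν - V (E x) * ((E x - q x)/ν) := by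
      rw [hSF]; simp only [hR, hG]; field_simp; ring
    have t1 : |ψ' x * (cv (ek ν) (fun y => H (E y)) x - H (E x))| ≤ Φ' * (LH * ν * cv (ek ν) D x) := by
      rw [abs_mul]; exact mul_le_mul (hψ' x) (hSH x) (abs_nonneg _) hΦ'0
    have t2 : |ψ' x * (deriv α (E x) * cv (ek ν) R x)| ≤ Φ' * (A1 * ε) := by
      rw [abs_mul, abs_mul]
      exact mul_le_mul (hψ' x) (mul_le_mul (hA1 _ (hEM x)) (hε x) (abs_nonneg _) hA10)
        (by positivity) hΦ'0
    have t3 : |ψ x * (deriv (deriv α) (E x) * ((E x - q x)/ν) * cv (ek ν) R x)| ≤ Φ * (A2 * D x * ε) := by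
      rw [abs_mul, abs_mul, abs_mul, abs_of_nonneg (hψ0 x)]
      exact mul_le_mul (hψΦ x) (mul_le_mul (mul_le_mul_of_nonneg_right (hA2 _ (hEM x))
        (abs_nonneg _)) (hε x) (abs_nonneg _) (by positivity)) (by positivity) hΦ0
    have t4 : ψ x * ((cv (ek ν) (fun y => H (E y)) x - H (E x))/ν) ≤
        ψ x * (deriv α (E x) * (cv (ek ν) (fun y => G (E y)) x - G (E x))/ν) :=
      mul_le_mul_of_nonneg_left (div_le_div_of_nonneg_right (hcomp x) hν.le) (hψ0 x)
    have e2 : β (E x) * ψ' x - ψ x * deriv α (E x) * ((F x - cv (ek ν) F x)/ν) = Q' x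
        - ψ' x * (cv (ek ν) (fun y => H (E y)) x - H (E x))
        - ψ' x * (deriv α (E x) * cv (ek ν) R x)
        - ψ x * (deriv (deriv α) (E x) * ((E x - q x)/ν) * cv (ek ν) R x)
        + (ψ x * (deriv α (E x) * (cv (ek ν) (fun y => G (E y)) x - G (E x))/ν)
          - ψ x * ((cv (ek ν) (fun y => H (E y)) x - H (E x))/ν)) := by
      rw [e1]; simp only [hQ']; ring
    rw [e2]
    linarith [(abs_le.1 t1).2, (abs_le.1 t2).2, (abs_le.1 t3).2]
  have j1 : IntervalIntegrable (fun x => Q' x - (Φ' * (LH * ν) * cv (ek ν) D x + ε * (Φ' * A1)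
      + ε * (Φ * A2) * D x)) volume (-a) a := Continuous.intervalIntegrable (by fun_prop) _ _
  have j2 : IntervalIntegrable (fun x => β (E x) * ψ' x
      - ψ x * deriv α (E x) * ((F x - cv (ek ν) F x)/ν)) volume (-a) a :=
    Continuous.intervalIntegrable (by fun_prop) _ _
  have hmono := intervalIntegral.integral_mono_on (by linarith : -a ≤ a) j1 j2 hpt
  refine le_trans ?_ hmono
  have hsplit : ∀ c1 c2 c3 : ℝ, ∫ x in (-a)..a, (Q' x - (c1 * cv (ek ν) D x + c2 + c3 * D x)) =
      0 - (c1 * (∫ x in (-a)..a, cv (ek ν) D x) + 2 * a * c2 + c3 * ∫ x in (-a)..a, D x) := by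
    intro c1 c2 c3
    have i1 : IntervalIntegrable (fun x => c1 * cv (ek ν) D x) volume (-a) a :=
      Continuous.intervalIntegrable (by fun_prop) _ _
    have i2 : IntervalIntegrable (fun x => c3 * D x) volume (-a) a :=
      Continuous.intervalIntegrable (by fun_prop) _ _
    rw [intervalIntegral.integral_sub (hQ'c.intervalIntegrable _ _)
        ((i1.add (by simp)).add i2), hQint,
      intervalIntegral.integral_add (i1.add (by simp)) i2,
      intervalIntegral.integral_add i1 (by simp),
      intervalIntegral.integral_const_mul, intervalIntegral.integral_const_mul,
      intervalIntegral.integral_const, smul_eq_mul]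
    ring
  rw [hsplit]
  have k1 := mul_le_mul_of_nonneg_left hSDint (by positivity : 0 ≤ Φ' * (LH * ν))
  have k2 := mul_le_mul_of_nonneg_left hDint (by positivity : 0 ≤ ε * (Φ * A2))
  nlinarith

/-! ### The averaged commutator -/

/-- The commutator `(V(W) - V(E)) q`, averaged by `S`, is uniformly small when the kernel `g` is
close to the exponential one in a first-moment sense near the origin and in mass away from it.
Writing `q = E - ν Eₓ` near the origin, the difference `W - E` is bounded in `L¹` by the variation
of `E`, and `S` maps `L¹` to `L∞` with norm `1/ν`. -/
lemma averaged_commutator_le {ν : ℝ} (hν : 0 < ν) {g : ℝ → ℝ} (hg : IntegrableOn g (Ioi 0))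
    (hg0 : ∀ z ∈ Ioi (0:ℝ), 0 ≤ g z) (hg1 : ∫ z in Ioi (0:ℝ), g z = 1) {δ ρ τ : ℝ} (hδ : 0 < δ)
    (hρ : ∫ z in Ioi δ, |g z - ek ν z| ≤ ρ)
    (hτ : (1/ν) * ∫ z in Ioc 0 δ, |g z - ek ν z| * (z + ν) ≤ τ)
    {q : ℝ → ℝ} (hq : Continuous q) {M : ℝ} (hqM : ∀ x, q x ∈ Icc 0 M)
    {B : ℝ} (hB0 : 0 ≤ B) (hB : eVariationOn (cv (ek ν) q) univ ≤ ENNReal.ofReal B)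
    {V : ℝ → ℝ} (hV : Continuous V) {L : ℝ} (hL0 : 0 ≤ L)
    (hL : ∀ s ∈ Icc 0 M, ∀ t ∈ Icc 0 M, |V s - V t| ≤ L * |s - t|) (x : ℝ) :
    |cv (ek ν) (fun y => V (cv g q y) * q y - V (cv (ek ν) q y) * q y) x|
      ≤ L * M * (2 * M * ρ + B * τ) := by
  have hqb : ∀ x, |q x| ≤ M := fun x => abs_le.2 ⟨by linarith [(hqM x).1, (hqM x).2], (hqM x).2⟩
  have hM0 : 0 ≤ M := (hqM 0).1.trans (hqM 0).2
  have hki := ek_integrable hν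
  have hk0 : ∀ z ∈ Ioi (0:ℝ), 0 ≤ ek ν z := fun z _ => ek_nonneg hν z
  have hk1 := ek_integral hν
  set E := cv (ek ν) q with hE
  set W := cv g q with hW
  have hEM : ∀ x, E x ∈ Icc 0 M := cv_mem hki hk0 hk1 hq hqM
  have hWM : ∀ x, W x ∈ Icc 0 M := cv_mem hg hg0 hg1 hq hqM
  have hEd : ∀ x, HasDerivAt E ((E x - q x)/ν) x := cv_ek_hasDerivAt hν hq hqb
  have hEc : Continuous E := cv_continuous hki hq hqb
  have hWc : Continuous W := cv_continuous hg hq hqb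
  set E' : ℝ → ℝ := fun x => (E x - q x)/ν with hE'
  have hE'c : Continuous E' := by fun_prop
  have hνE' : ∀ x, |ν * E' x| ≤ M := fun x => by
    have : ν * E' x = E x - q x := by simp only [hE']; field_simp
    rw [this, abs_le]
    constructor <;> linarith [(hEM x).1, (hEM x).2, (hqM x).1, (hqM x).2]
  set d : ℝ → ℝ := fun z => g z - ek ν z with hd
  have hdi : IntegrableOn d (Ioi 0) := hg.sub hki
  have hsub1 : Ioc 0 δ ⊆ Ioi (0:ℝ) := Ioc_subset_Ioi_self
  have hsub2 : Ioi δ ⊆ Ioi (0:ℝ) := Ioi_subset_Ioi hδ.le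
  have hd0 : (∫ z in Ioc 0 δ, d z) + ∫ z in Ioi δ, d z = 0 := by
    rw [← setIntegral_union Ioc_disjoint_Ioi_same measurableSet_Ioi (hdi.mono_set hsub1)
      (hdi.mono_set hsub2), Ioc_union_Ioi_eq_Ioi hδ.le, integral_sub hg hki, hg1, hk1, sub_self]
  have hρ0 : 0 ≤ ρ := le_trans (integral_nonneg fun _ => abs_nonneg _) hρ
  have htail : |∫ z in Ioi δ, d z| ≤ ρ := (abs_integral_le_integral_abs).trans hρ
  set k : ℝ → ℝ := (Ioc 0 δ).indicator (fun z => |d z|) with hk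
  have hkint : IntegrableOn k (Ioi 0) := by
    have : IntegrableOn (fun z => |d z|) (Ioi 0) := hdi.abs
    exact this.indicator measurableSet_Ioc
  have hknn : ∀ z, 0 ≤ k z := fun z => indicator_nonneg (fun _ _ => abs_nonneg _) z
  set J : ℝ → ℝ → ℝ := fun y z => |E (y + z) - E y| + |ν * E' (y + z)| with hJ
  have hJc : Continuous (fun p : ℝ × ℝ => J p.1 p.2) := by fun_prop
  have hJ0 : ∀ y z, 0 ≤ J y z := fun y z => by positivity
  have hJb : ∀ y z, |J y z| ≤ M + M := fun y z => by
    rw [abs_of_nonneg (hJ0 y z)]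
    refine add_le_add ?_ (hνE' _)
    rw [abs_le]
    constructor <;> linarith [(hEM y).1, (hEM y).2, (hEM (y+z)).1, (hEM (y+z)).2]
  set N : ℝ → ℝ := fun y => ∫ z in Ioi (0:ℝ), k z * J y z with hN
  have hNc : Continuous N := continuous_kernel_integral hkint hJc hJb
  have hN0 : ∀ y, 0 ≤ N y := fun y =>
    integral_nonneg fun z => mul_nonneg (hknn z) (hJ0 y z)
  have hJi : ∀ y, IntegrableOn (fun z => k z * J y z) (Ioi 0) := fun y =>
    Integrable.mul_bdd (c := M + M) hkint
      (hJc.comp (Continuous.prodMk_right y)).aestronglyMeasurable (ae_of_all _ fun z => hJb y z)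
  set CN : ℝ := ∫ z in Ioi (0:ℝ), k z * (M + M) with hCN
  have hNb : ∀ y, |N y| ≤ CN := fun y => by
    rw [abs_of_nonneg (hN0 y)]
    refine integral_mono (hJi y) (hkint.mul_const _) fun z => ?_
    exact mul_le_mul_of_nonneg_left ((le_abs_self _).trans (hJb y z)) (hknn z)
  -- pointwise bound on `W - E`
  have hWE : ∀ y, |W y - E y| ≤ 2 * M * ρ + N y := by
    intro y
    have e1 : W y - E y = ∫ z in Ioi (0:ℝ), d z * q (y + z) := by
      simp only [hW, hE, cv]
      rw [← integral_sub (cv_integrable hg hq hqb y) (cv_integrable hki hq hqb y)]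
      simp only [hd, sub_mul]
    have hdq := cv_integrable hdi hq hqb y
    have e2 : W y - E y = (∫ z in Ioc 0 δ, d z * q (y + z)) + ∫ z in Ioi δ, d z * q (y + z) := by
      rw [e1, ← setIntegral_union Ioc_disjoint_Ioi_same measurableSet_Ioi (hdq.mono_set hsub1)
        (hdq.mono_set hsub2), Ioc_union_Ioi_eq_Ioi hδ.le]
    have e3 : |∫ z in Ioi δ, d z * q (y + z)| ≤ M * ρ := by
      refine (abs_integral_le_integral_abs).trans ?_
      calc ∫ z in Ioi δ, |d z * q (y + z)| ≤ ∫ z in Ioi δ, |d z| * M := by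
            refine integral_mono (hdq.mono_set hsub2).abs ((hdi.mono_set hsub2).abs.mul_const M)
              fun z => ?_
            simp only [abs_mul]
            exact mul_le_mul_of_nonneg_left (hqb _) (abs_nonneg _)
        _ ≤ M * ρ := by
            rw [integral_mul_const, mul_comm]
            exact mul_le_mul_of_nonneg_left hρ hM0
    have hrest : IntegrableOn (fun z => d z * ((E (y + z) - E y) - ν * E' (y + z))) (Ioi 0) :=
      Integrable.mul_bdd (c := M + M) hdi (by fun_prop) (ae_of_all _ fun z =>
        (abs_sub _ _).trans ((le_abs_self _).trans (hJb y z)))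
    have e4 : ∫ z in Ioc 0 δ, d z * q (y + z) = (∫ z in Ioc 0 δ, d z) * E y
        + ∫ z in Ioc 0 δ, d z * ((E (y + z) - E y) - ν * E' (y + z)) := by
      rw [← integral_mul_const, ← integral_add ((hdi.mono_set hsub1).mul_const _)
        (hrest.mono_set hsub1)]
      congr 1; ext z
      simp only [hE']; field_simp; ring
    have e5 : |∫ z in Ioc 0 δ, d z * ((E (y + z) - E y) - ν * E' (y + z))| ≤ N y := by
      refine (abs_integral_le_integral_abs).trans ?_
      have : N y = ∫ z in Ioc 0 δ, |d z| * J y z := by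
        have : (fun z => k z * J y z) = (Ioc 0 δ).indicator (fun z => |d z| * J y z) := by
          ext z; simp only [hk, indicator]; split_ifs <;> simp
        simp only [hN]
        rw [this, setIntegral_indicator measurableSet_Ioc, inter_eq_self_of_subset_right hsub1]
      rw [this]
      refine integral_mono (hrest.mono_set hsub1).abs
        (Integrable.mul_bdd (c := M + M) (hdi.mono_set hsub1).abs
          (hJc.comp (Continuous.prodMk_right y)).aestronglyMeasurable
          (ae_of_all _ fun z => hJb y z)) fun z => ?_
      simp only [abs_mul]
      exact mul_le_mul_of_nonneg_left ((abs_sub _ _).trans (by simp [hJ, abs_mul])) (abs_nonneg _)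
    have e6 : |(∫ z in Ioc 0 δ, d z) * E y| ≤ ρ * M := by
      rw [eq_neg_of_add_eq_zero_left hd0, abs_mul, abs_neg]
      exact mul_le_mul htail (abs_le.2 ⟨by linarith [(hEM y).1], (hEM y).2⟩) (abs_nonneg _) hρ0
    rw [e2, e4]
    refine (abs_add_le _ _).trans ?_
    have := abs_add_le ((∫ z in Ioc 0 δ, d z) * E y)
      (∫ z in Ioc 0 δ, d z * ((E (y + z) - E y) - ν * E' (y + z)))
    linarith
  -- bound of `S N`
  have hNm : Measurable fun z => ‖N (x + z)‖ₑ :=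
    (hNc.measurable.comp (measurable_const_add x)).enorm
  have hSN : cv (ek ν) N x ≤ B * τ := by
    have hlin : ‖cv (ek ν) N x‖ₑ ≤ ENNReal.ofReal (B * τ) := by
      calc ‖cv (ek ν) N x‖ₑ ≤ ∫⁻ z in Ioi (0:ℝ), ‖ek ν z * N (x + z)‖ₑ :=
            enorm_integral_le_lintegral_enorm _
        _ ≤ ∫⁻ z in Ioi (0:ℝ), ENNReal.ofReal (1/ν) * ‖N (x + z)‖ₑ := by
            refine setLIntegral_mono (hNm.const_mul _) fun z hz => ?_
            rw [enorm_mul]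
            gcongr
            rw [Real.enorm_eq_ofReal (ek_nonneg hν z)]
            refine ENNReal.ofReal_le_ofReal ?_
            unfold ek
            refine mul_le_of_le_one_right (by positivity) (Real.exp_le_one_iff.2 ?_)
            rw [neg_div]
            have : 0 < z / ν := div_pos hz hν
            linarith
        _ = ENNReal.ofReal (1/ν) * ∫⁻ z in Ioi (0:ℝ), ‖N (x + z)‖ₑ :=
            lintegral_const_mul _ hNm
        _ ≤ ENNReal.ofReal (1/ν) * ∫⁻ y in Ioi (0:ℝ), ∫⁻ z in Ioi (0:ℝ), ‖k z * J (x + y) z‖ₑ := by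
            gcongr with y
            exact enorm_integral_le_lintegral_enorm _
        _ = ENNReal.ofReal (1/ν) * ∫⁻ z in Ioi (0:ℝ), ∫⁻ y in Ioi (0:ℝ), ‖k z * J (x + y) z‖ₑ := by
            rw [lintegral_lintegral_swap]
            refine AEMeasurable.enorm ?_
            refine AEMeasurable.mul ?_ ?_
            · exact hkint.aestronglyMeasurable.aemeasurable.comp_snd
            · exact (by fun_prop : Continuous fun p : ℝ × ℝ => J (x + p.1) p.2).aemeasurable
        _ ≤ ENNReal.ofReal (1/ν) * ∫⁻ z in Ioi (0:ℝ), ENNReal.ofReal (B * (k z * (z + ν))) := by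
            gcongr ENNReal.ofReal (1/ν) * ?_
            refine setLIntegral_mono_ae' measurableSet_Ioi (ae_of_all _ fun z hz => ?_)
            have hz : 0 < z := hz
            simp only [enorm_mul]
            rw [lintegral_const_mul _ (by fun_prop)]
            have b1 : ∫⁻ y in Ioi (0:ℝ), ‖J (x + y) z‖ₑ ≤
                ENNReal.ofReal z * ENNReal.ofReal B + ENNReal.ofReal ν * ENNReal.ofReal B := by
              calc ∫⁻ y in Ioi (0:ℝ), ‖J (x + y) z‖ₑ
                  ≤ ∫⁻ y in Ioi (0:ℝ), (‖E (x + y + z) - E (x + y)‖ₑ + ‖ν * E' (x + y + z)‖ₑ) := by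
                    refine lintegral_mono fun y => ?_
                    refine (enorm_add_le _ _).trans (le_of_eq ?_)
                    simp only [enorm_abs]
                _ = (∫⁻ y in Ioi (0:ℝ), ‖E (x + y + z) - E (x + y)‖ₑ)
                    + ∫⁻ y in Ioi (0:ℝ), ‖ν * E' (x + y + z)‖ₑ :=
                    lintegral_add_left (by fun_prop) _
                _ ≤ _ := by
                    gcongr
                    · have := lintegral_shift_le (fun y => E (x + y)) 0 hz
                      simp only [← add_assoc] at this
                      refine this.trans ?_
                      gcongr
                      refine le_trans ?_ hB
                      exact eVariationOn.comp_le_of_monotoneOn E (fun y => x + y)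
                        (fun a _ b _ hab => by simpa using hab) (fun _ _ => mem_univ _)
                    · simp only [enorm_mul]
                      rw [lintegral_const_mul _ (by fun_prop), Real.enorm_eq_ofReal hν.le]
                      gcongr
                      have hder : ∀ y, HasDerivAt (fun y => E (x + y + z)) (E' (x + y + z)) y := by
                        intro y
                        have h1 : HasDerivAt (fun y => x + y + z) 1 y :=
                          ((hasDerivAt_id y).const_add x).add_const z
                        exact ((hEd (x + y + z)).comp y h1).congr_deriv (mul_one _)
                      refine (lintegral_deriv_le hder 0).trans (le_trans ?_ hB)
                      exact eVariationOn.comp_le_of_monotoneOn E (fun y => x + y + z)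
                        (fun a _ b _ hab => by simpa using hab) (fun _ _ => mem_univ _)
            calc ‖k z‖ₑ * ∫⁻ y in Ioi (0:ℝ), ‖J (x + y) z‖ₑ
                ≤ ‖k z‖ₑ * (ENNReal.ofReal z * ENNReal.ofReal B
                  + ENNReal.ofReal ν * ENNReal.ofReal B) := by gcongr
              _ = _ := by
                rw [Real.enorm_eq_ofReal (hknn z), ← ENNReal.ofReal_mul hz.le,
                  ← ENNReal.ofReal_mul hν.le, ← ENNReal.ofReal_add (by positivity) (by positivity),
                  ← ENNReal.ofReal_mul (hknn z)]
                congr 1; ring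
        _ = ENNReal.ofReal (1/ν) * ENNReal.ofReal (∫ z in Ioi (0:ℝ), B * (k z * (z + ν))) := by
            rw [ofReal_integral_eq_lintegral_ofReal]
            · refine Integrable.const_mul ?_ _
              have h1 : IntegrableOn (fun z => |d z| * (z + ν)) (Ioc 0 δ) := by
                refine Integrable.mul_bdd (c := δ + ν) (hdi.mono_set hsub1).abs (by fun_prop) ?_
                refine (ae_restrict_iff' measurableSet_Ioc).2 (ae_of_all _ fun z hz => ?_)
                rw [Real.norm_eq_abs, abs_of_pos (by linarith [hz.1])]
                linarith [hz.2]
              have h2 : (fun z => k z * (z + ν)) = (Ioc 0 δ).indicator (fun z => |d z| * (z + ν)) := by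
                ext z; simp only [hk, indicator]; split_ifs <;> simp
              rw [h2]
              have h3 := (integrable_indicator_iff measurableSet_Ioc).2 h1
              exact h3.restrict
            · refine (ae_restrict_iff' measurableSet_Ioi).2 (ae_of_all _ fun z hz => ?_)
              have hz : 0 < z := hz
              have := hknn z
              simp only [Pi.zero_apply]
              positivity
        _ ≤ ENNReal.ofReal (B * τ) := by
            rw [← ENNReal.ofReal_mul (by positivity), integral_const_mul]
            refine ENNReal.ofReal_le_ofReal ?_
            have h2 : (fun z => k z * (z + ν)) = (Ioc 0 δ).indicator (fun z => |d z| * (z + ν)) := by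
              ext z; simp only [hk, indicator]; split_ifs <;> simp
            rw [h2, setIntegral_indicator measurableSet_Ioc, inter_eq_self_of_subset_right hsub1]
            calc _ = B * ((1/ν) * ∫ z in Ioc 0 δ, |d z| * (z + ν)) := by ring
              _ ≤ _ := mul_le_mul_of_nonneg_left hτ hB0
    have hnn : 0 ≤ cv (ek ν) N x := by
      unfold cv
      exact setIntegral_nonneg measurableSet_Ioi fun z hz => mul_nonneg (hk0 z hz) (hN0 _)
    have hτ0 : 0 ≤ τ := le_trans (mul_nonneg (by positivity) (setIntegral_nonneg measurableSet_Ioc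
      fun z hz => mul_nonneg (abs_nonneg _) (by linarith [hz.1]))) hτ
    rw [Real.enorm_eq_ofReal hnn] at hlin
    exact (ENNReal.ofReal_le_ofReal_iff (by positivity)).1 hlin
  have hRb : ∀ y, |V (W y) * q y - V (E y) * q y| ≤ L * M * (2 * M * ρ + N y) := by
    intro y
    rw [← sub_mul, abs_mul]
    have h1 := hL _ (hWM y) _ (hEM y)
    have h2 : |V (W y) - V (E y)| ≤ L * (2 * M * ρ + N y) :=
      h1.trans (mul_le_mul_of_nonneg_left (hWE y) hL0)
    calc _ ≤ L * (2 * M * ρ + N y) * M :=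
          mul_le_mul h2 (hqb y) (abs_nonneg _) ((abs_nonneg _).trans h2)
      _ = _ := by ring
  have hCb : ∀ y, |L * M * (2 * M * ρ + N y)| ≤ L * M * (2 * M * ρ + CN) := fun y => by
    rw [abs_of_nonneg (by have := hN0 y; positivity)]
    have := (le_abs_self _).trans (hNb y)
    gcongr
  have hRb' := fun y => (hRb y).trans ((le_abs_self _).trans (hCb y))
  have hfin : cv (ek ν) (fun y => L * M * (2 * M * ρ + N y)) x ≤ L * M * (2 * M * ρ + B * τ) := by
    rw [cv_const_mul]
    have := cv_sub hki (f := fun _ => 2 * M * ρ) (g := fun y => (-1) * N y) continuous_const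
      (by fun_prop) (fun _ => le_rfl) (N := CN) (fun y => by simpa using hNb y) x
    rw [cv_const hk1, cv_const_mul] at this
    simp only [neg_mul, one_mul, sub_neg_eq_add] at this
    rw [this]
    gcongr
  have hRc : Continuous (fun y => V (W y) * q y - V (E y) * q y) := by fun_prop
  rw [abs_le]
  constructor
  · have := cv_mono hki hk0 (f := fun y => (-1) * (L * M * (2 * M * ρ + N y)))
      (g := fun y => V (W y) * q y - V (E y) * q y) (by fun_prop) hRc
      (fun y => by simpa using hCb y) hRb' (fun y => by linarith [(abs_le.1 (hRb y)).1]) x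
    rw [cv_const_mul] at this
    linarith
  · exact (cv_mono hki hk0 hRc (by fun_prop) hRb' hCb (fun y => (abs_le.1 (hRb y)).2) x).trans hfin

/-! ### Convergence of the scaled kernel to the exponential one -/

namespace Kernel

/-- The length scale `ν = -η/γ'(0)` of the exponential surrogate. -/
noncomputable def nu (K : Kernel) (η : ℝ) : ℝ := -η / K.dγ 0

lemma nu_pos (K : Kernel) {η : ℝ} (hη : 0 < η) : 0 < K.nu η :=
  div_pos_of_neg_of_neg (by linarith) K.dγ0_neg

lemma nu_tendsto (K : Kernel) : Tendsto K.nu (𝓝[>] 0) (𝓝[>] 0) := by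
  refine tendsto_nhdsWithin_iff.2 ⟨?_, eventually_mem_nhdsWithin.mono fun η hη => K.nu_pos hη⟩
  have : Continuous K.nu := by unfold nu; fun_prop
  have h := (this.tendsto 0).mono_left (nhdsWithin_le_nhds (s := Ioi 0))
  simpa [nu] using h

lemma inv_tendsto : Tendsto (fun η : ℝ => 1/η) (𝓝[>] 0) atTop := by
  simpa using tendsto_inv_nhdsGT_zero (𝕜 := ℝ)

lemma deriv_zero (K : Kernel) : HasDerivWithinAt K.γ (K.dγ 0) (Ici 0) 0 :=
  K.deriv_Ico 0 ⟨le_rfl, K.δ_pos⟩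

/-- Exponential domination of `γ` near the origin; the tail is below the value reached there. -/
lemma exists_decay (K : Kernel) : ∃ δ₀, 0 < δ₀ ∧ (∀ z ∈ Ioc 0 δ₀, K.γ z ≤ Real.exp (K.dγ 0 * z / 2)) ∧
    (∀ z, δ₀ < z → z ≠ K.δ → K.γ z ≤ Real.exp (K.dγ 0 * δ₀ / 2)) := by
  have hs := (hasDerivWithinAt_iff_tendsto_slope' (by simp : (0:ℝ) ∉ Ioi 0)).1
    (K.deriv_zero.mono Ioi_subset_Ici_self)
  have hlt : K.dγ 0 < K.dγ 0 / 2 := by linarith [K.dγ0_neg]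
  have hev := (hs.eventually (gt_mem_nhds hlt))
  obtain ⟨u, hu, hu'⟩ := (mem_nhdsGT_iff_exists_Ioo_subset).1 hev
  have hu0 : 0 < u := hu
  have hδ := K.δ_pos
  have h1 : ∀ z ∈ Ioo 0 u, K.γ z ≤ Real.exp (K.dγ 0 * z / 2) := by
    intro z hz
    have : slope K.γ 0 z < K.dγ 0 / 2 := hu' hz
    rw [slope_def_field, div_lt_iff₀ (by linarith [hz.1]), K.γ0] at this
    have h2 := Real.add_one_le_exp (K.dγ 0 * z / 2)
    linarith
  refine ⟨min u K.δ / 2, by positivity, fun z hz => h1 z ⟨hz.1, ?_⟩, ?_⟩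
  · have := min_le_left u K.δ
    linarith [hz.2]
  · set δ₀ := min u K.δ / 2 with hδ₀
    have hδ₀0 : 0 < δ₀ := by positivity
    have hδ₀u : δ₀ < u := by have := min_le_left u K.δ; linarith
    have hδ₀δ : δ₀ < K.δ := by have := min_le_right u K.δ; linarith
    intro z hz hne
    refine le_trans ?_ (h1 δ₀ ⟨hδ₀0, hδ₀u⟩)
    rcases lt_or_gt_of_ne hne with h | h
    · have hd : ∀ x ∈ Ioo 0 K.δ, HasDerivAt K.γ (K.dγ x) x := fun x hx =>
        (K.deriv_Ico x ⟨hx.1.le, hx.2⟩).hasDerivAt (Ici_mem_nhds hx.1)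
      have hanti : AntitoneOn K.γ (Ioo 0 K.δ) := by
        refine antitoneOn_of_deriv_nonpos (convex_Ioo _ _)
          (fun x hx => (hd x hx).continuousAt.continuousWithinAt) ?_ ?_
        · intro x hx; rw [interior_Ioo] at hx
          exact (hd x hx).differentiableAt.differentiableWithinAt
        · intro x hx; rw [interior_Ioo] at hx
          rw [(hd x hx).deriv]; exact (K.dγ_neg x hx).le
      exact hanti ⟨hδ₀0, hδ₀δ⟩ ⟨hδ₀0.trans hz, h⟩ hz.le
    · exact K.upper δ₀ ⟨hδ₀0, hδ₀δ⟩ z h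

lemma le_one (K : Kernel) {z : ℝ} (hz : 0 < z) (hne : z ≠ K.δ) : K.γ z ≤ 1 := by
  obtain ⟨δ₀, h0, h1, h2⟩ := K.exists_decay
  have hd := K.dγ0_neg
  rcases le_or_gt z δ₀ with h | h
  · refine (h1 z ⟨hz, h⟩).trans (Real.exp_le_one_iff.2 ?_)
    nlinarith
  · refine (h2 z h hne).trans (Real.exp_le_one_iff.2 ?_)
    nlinarith

lemma ae_ne (c : ℝ) (s : Set ℝ) : ∀ᵐ z ∂(volume.restrict s), z ≠ c :=
  ae_restrict_of_ae (by simp [ae_iff])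

lemma rpow_split {x p : ℝ} (hx : 0 ≤ x) (hp : 1 ≤ p) : x ^ p = x ^ (p - 1) * x := by
  rcases hx.eq_or_lt with rfl | h
  · rw [Real.zero_rpow (by linarith)]; simp
  · rw [Real.rpow_sub_one h.ne']; field_simp

lemma pow_integrable (K : Kernel) {p : ℝ} (hp : 1 ≤ p) :
    IntegrableOn (fun z => K.γ z ^ p) (Ioi 0) := by
  refine Integrable.mono' K.integrable
    (K.integrable.aestronglyMeasurable.aemeasurable.pow_const p).aestronglyMeasurable ?_
  filter_upwards [ae_ne K.δ (Ioi 0), ae_restrict_mem measurableSet_Ioi] with z hz hz0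
  have hz0 : 0 < z := hz0
  have h0 := K.nonneg z hz0.le
  rw [Real.norm_eq_abs, abs_of_nonneg (Real.rpow_nonneg h0 _), rpow_split h0 hp]
  exact mul_le_of_le_one_left h0 (Real.rpow_le_one h0 (K.le_one hz0 hz) (by linarith))

lemma integral_subst {ν : ℝ} (hν : 0 < ν) (δ₀ : ℝ) (f : ℝ → ℝ) :
    ∫ z in Ioc 0 δ₀, f z = ν * ∫ s in Ioi (0:ℝ), (if ν * s ≤ δ₀ then f (ν * s) else 0) := by
  have h := integral_comp_mul_left_Ioi ((Iic δ₀).indicator f) 0 hν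
  have h2 : ∫ s in Ioi (0:ℝ), (if ν * s ≤ δ₀ then f (ν * s) else 0) =
      ∫ s in Ioi (0:ℝ), (Iic δ₀).indicator f (ν * s) := by
    congr 1
  rw [h2, h, mul_zero, setIntegral_indicator measurableSet_Iic, Ioi_inter_Iic, smul_eq_mul]
  field_simp

/-- Rescaled powers of `γ` converge pointwise to the exponential. -/
lemma pow_tendsto_exp (K : Kernel) {s : ℝ} (hs : 0 < s) :
    Tendsto (fun η => K.γ (K.nu η * s) ^ (1/η)) (𝓝[>] 0) (𝓝 (Real.exp (-s))) := by
  have hlog : HasDerivWithinAt (fun z => Real.log (K.γ z)) (K.dγ 0) (Ici 0) 0 := by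
    have := K.deriv_zero.log (by rw [K.γ0]; norm_num)
    simpa [K.γ0] using this
  have hsl := (hasDerivWithinAt_iff_tendsto_slope' (by simp : (0:ℝ) ∉ Ioi 0)).1
    (hlog.mono Ioi_subset_Ici_self)
  have hmap : Tendsto (fun η => K.nu η * s) (𝓝[>] 0) (𝓝[>] 0) := by
    refine tendsto_nhdsWithin_iff.2 ⟨?_, eventually_mem_nhdsWithin.mono fun η hη =>
      mul_pos (K.nu_pos hη) hs⟩
    simpa using (tendsto_nhdsWithin_iff.1 K.nu_tendsto).1.mul_const s
  have h1 := (hsl.comp hmap).mul_const (-s / K.dγ 0)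
  have hpos : ∀ᶠ η in 𝓝[>] (0:ℝ), 0 < K.γ (K.nu η * s) := by
    have hc : Tendsto K.γ (𝓝[>] 0) (𝓝 1) := by
      have := K.deriv_zero.continuousWithinAt.mono Ioi_subset_Ici_self
      simpa [ContinuousWithinAt, K.γ0] using this
    exact (hc.comp hmap).eventually (lt_mem_nhds one_pos)
  have h2 : K.dγ 0 * (-s / K.dγ 0) = -s := by field_simp [K.dγ0_neg.ne]
  rw [h2] at h1
  refine ((Real.continuous_exp.tendsto _).comp h1).congr' ?_
  filter_upwards [hpos, eventually_mem_nhdsWithin] with η hη hη0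
  have hη0 : 0 < η := hη0
  simp only [Function.comp, slope_def_field]
  rw [Real.rpow_def_of_pos hη, K.γ0, Real.log_one, sub_zero, sub_zero]
  congr 1
  have := K.dγ0_neg.ne
  simp only [nu]
  field_simp

lemma pow_le_exp (K : Kernel) {δ₀ : ℝ} (h : ∀ z ∈ Ioc 0 δ₀, K.γ z ≤ Real.exp (K.dγ 0 * z / 2))
    {η s : ℝ} (hη : 0 < η) (hs : 0 < s) (hle : K.nu η * s ≤ δ₀) :
    K.γ (K.nu η * s) ^ (1/η) ≤ Real.exp (-s/2) := by
  have hz : 0 < K.nu η * s := mul_pos (K.nu_pos hη) hs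
  refine (Real.rpow_le_rpow (K.nonneg _ hz.le) (h _ ⟨hz, hle⟩) (by positivity)).trans (le_of_eq ?_)
  rw [← Real.exp_mul]
  congr 1
  have := K.dγ0_neg.ne
  simp only [nu]; field_simp

/-- The tail mass of `γ^{1/η}` is exponentially small, hence `o(ν)`. -/
lemma tail_tendsto (K : Kernel) {δ₀ : ℝ} (hδ₀ : 0 < δ₀)
    (h : ∀ z, δ₀ < z → z ≠ K.δ → K.γ z ≤ Real.exp (K.dγ 0 * δ₀ / 2)) :
    Tendsto (fun η => (1/K.nu η) * ∫ z in Ioi δ₀, K.γ z ^ (1/η)) (𝓝[>] 0) (𝓝 0) := by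
  set b := -(K.dγ 0 * δ₀ / 2) with hb
  have hb0 : 0 < b := by have := K.dγ0_neg; nlinarith
  set I := ∫ z in Ioi δ₀, K.γ z with hI
  have hKi : IntegrableOn K.γ (Ioi δ₀) := K.integrable.mono_set (Ioi_subset_Ioi hδ₀.le)
  have hup : Tendsto (fun η : ℝ => (-K.dγ 0) * (Real.exp b * I) * ((1/η) ^ (1:ℝ) * Real.exp (-b * (1/η))))
      (𝓝[>] 0) (𝓝 0) := by
    have := (tendsto_rpow_mul_exp_neg_mul_atTop_nhds_zero 1 b hb0).comp inv_tendsto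
    simpa using this.const_mul ((-K.dγ 0) * (Real.exp b * I))
  have hev : ∀ᶠ η in 𝓝[>] (0:ℝ), η ≤ 1 :=
    mem_nhdsWithin_of_mem_nhds (Iic_mem_nhds one_pos)
  refine tendsto_of_tendsto_of_tendsto_of_le_of_le' tendsto_const_nhds hup ?_ ?_
  · filter_upwards [eventually_mem_nhdsWithin] with η hη
    have := K.nu_pos hη
    refine mul_nonneg (by positivity) (setIntegral_nonneg measurableSet_Ioi fun z hz => ?_)
    exact Real.rpow_nonneg (K.nonneg z (hδ₀.trans hz).le) _
  · filter_upwards [eventually_mem_nhdsWithin, hev] with η hη hη1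
    have hη0 : 0 < η := hη
    have hp : 1 ≤ 1/η := by rw [le_div_iff₀ hη0]; linarith
    have hfi : ∫ z in Ioi δ₀, K.γ z ^ (1/η) ≤ Real.exp (-b * (1/η - 1)) * I := by
      rw [hI, ← integral_const_mul]
      refine integral_mono_ae ((K.pow_integrable hp).mono_set (Ioi_subset_Ioi hδ₀.le))
        (hKi.const_mul _) ?_
      filter_upwards [ae_ne K.δ (Ioi δ₀), ae_restrict_mem measurableSet_Ioi] with z hz hz0
      have h0 := K.nonneg z (hδ₀.trans hz0).le
      rw [rpow_split h0 hp]
      refine mul_le_mul_of_nonneg_right ?_ h0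
      refine (Real.rpow_le_rpow h0 (h z hz0 hz) (by linarith)).trans (le_of_eq ?_)
      rw [← Real.exp_mul, hb, neg_neg]
    have hν := K.nu_pos hη0
    calc _ ≤ (1/K.nu η) * (Real.exp (-b * (1/η - 1)) * I) :=
          mul_le_mul_of_nonneg_left hfi (by positivity)
      _ = _ := by
          have : -b * (1/η - 1) = b + -b * (1/η) := by ring
          rw [this, Real.exp_add, Real.rpow_one]
          have := K.dγ0_neg.ne
          simp only [nu]; field_simp

lemma nu_mul_le_eventually (K : Kernel) {δ₀ : ℝ} (hδ₀ : 0 < δ₀) (s : ℝ) :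
    ∀ᶠ η in 𝓝[>] (0:ℝ), K.nu η * s ≤ δ₀ := by
  have : Tendsto (fun η => K.nu η * s) (𝓝[>] 0) (𝓝 0) := by
    simpa using (tendsto_nhdsWithin_iff.1 K.nu_tendsto).1.mul_const s
  exact (this.eventually (gt_mem_nhds hδ₀)).mono fun _ h => h.le

lemma integrable_exp_quarter : IntegrableOn (fun s : ℝ => Real.exp (-(1/4) * s)) (Ioi 0) :=
  integrableOn_exp_mul_Ioi (by norm_num) 0

lemma aesm_scaled (K : Kernel) {ν : ℝ} (hν : 0 < ν) (p : ℝ) :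
    AEMeasurable (fun s => K.γ (ν * s) ^ p) (volume.restrict (Ioi 0)) := by
  have h1 : AEMeasurable K.γ (volume.restrict (Ioi 0)) :=
    K.integrable.aestronglyMeasurable.aemeasurable
  refine AEMeasurable.pow_const ?_ p
  have h2 := (integrableOn_Ioi_comp_mul_left_iff K.γ 0 hν).2 (by simpa using K.integrable)
  exact h2.aestronglyMeasurable.aemeasurable

/-- `ν c_η → 1`. -/
lemma nu_mul_c_tendsto (K : Kernel) : Tendsto (fun η => K.nu η * K.c η) (𝓝[>] 0) (𝓝 1) := by
  obtain ⟨δ₀, hδ₀, h1, h2⟩ := K.exists_decay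
  have hev : ∀ᶠ η in 𝓝[>] (0:ℝ), η ≤ 1 :=
    mem_nhdsWithin_of_mem_nhds (Iic_mem_nhds one_pos)
  have hmain : Tendsto (fun η => ∫ s in Ioi (0:ℝ),
      (if K.nu η * s ≤ δ₀ then K.γ (K.nu η * s) ^ (1/η) else 0)) (𝓝[>] 0) (𝓝 1) := by
    have hexp : ∫ s in Ioi (0:ℝ), Real.exp (-s) = 1 := integral_exp_neg_Ioi_zero
    suffices hs : Tendsto (fun η => ∫ s in Ioi (0:ℝ),
        (if K.nu η * s ≤ δ₀ then K.γ (K.nu η * s) ^ (1/η) else 0)) (𝓝[>] 0)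
        (𝓝 (∫ s in Ioi (0:ℝ), Real.exp (-s))) by rwa [hexp] at hs
    refine tendsto_integral_filter_of_dominated_convergence
      (fun s => Real.exp (-(1/4) * s)) ?_ ?_ integrable_exp_quarter ?_
    · filter_upwards [eventually_mem_nhdsWithin] with η hη
      have hm : MeasurableSet {s : ℝ | K.nu η * s ≤ δ₀} :=
        measurableSet_le (by fun_prop) measurable_const
      have := (K.aesm_scaled (K.nu_pos hη) (1/η)).indicator hm
      exact this.aestronglyMeasurable
    · filter_upwards [eventually_mem_nhdsWithin] with η hη
      filter_upwards [ae_restrict_mem measurableSet_Ioi] with s hs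
      have hs : 0 < s := hs
      split_ifs with hle
      · rw [Real.norm_eq_abs, abs_of_nonneg (Real.rpow_nonneg (K.nonneg _
          (mul_pos (K.nu_pos hη) hs).le) _)]
        refine (K.pow_le_exp h1 hη hs hle).trans (Real.exp_le_exp.2 (by linarith))
      · simp [Real.exp_nonneg]
    · filter_upwards [ae_restrict_mem measurableSet_Ioi] with s hs
      refine (K.pow_tendsto_exp hs).congr' ?_
      filter_upwards [K.nu_mul_le_eventually hδ₀ s] with η hη
      rw [if_pos hη]
  have hsum := hmain.add (K.tail_tendsto hδ₀ h2)
  rw [add_zero] at hsum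
  have hinv := hsum.inv₀ one_ne_zero
  rw [inv_one] at hinv
  refine hinv.congr' ?_
  filter_upwards [eventually_mem_nhdsWithin, hev] with η hη hη1
  have hη0 : 0 < η := hη
  have hp : 1 ≤ 1/η := by rw [le_div_iff₀ hη0]; linarith
  have hν := K.nu_pos hη0
  have hfi := K.pow_integrable hp
  have e1 : ∫ y in Ioi (0:ℝ), K.γ y ^ (1/η) = (∫ y in Ioc 0 δ₀, K.γ y ^ (1/η))
      + ∫ y in Ioi δ₀, K.γ y ^ (1/η) := by
    rw [← setIntegral_union Ioc_disjoint_Ioi_same measurableSet_Ioi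
      (hfi.mono_set Ioc_subset_Ioi_self) (hfi.mono_set (Ioi_subset_Ioi hδ₀.le)),
      Ioc_union_Ioi_eq_Ioi hδ₀.le]
  rw [integral_subst hν] at e1
  rw [Kernel.c, e1]
  generalize (∫ s in Ioi (0:ℝ), (if K.nu η * s ≤ δ₀ then K.γ (K.nu η * s) ^ (1/η) else 0)) = A
  generalize (∫ y in Ioi δ₀, K.γ y ^ (1/η)) = A'
  rw [show A + 1 / K.nu η * A' = (K.nu η)⁻¹ * (K.nu η * A + A') by field_simp, mul_inv, inv_inv]

lemma c_nonneg (K : Kernel) (η : ℝ) : 0 ≤ K.c η :=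
  inv_nonneg.2 (setIntegral_nonneg measurableSet_Ioi fun z hz =>
    Real.rpow_nonneg (K.nonneg z (le_of_lt hz)) _)

lemma γη_nonneg (K : Kernel) (η : ℝ) {z : ℝ} (hz : 0 ≤ z) : 0 ≤ K.γη η z :=
  mul_nonneg (K.c_nonneg η) (Real.rpow_nonneg (K.nonneg z hz) _)

lemma γη_integrable (K : Kernel) {η : ℝ} (hη : 0 < η) (hη1 : η ≤ 1) :
    IntegrableOn (K.γη η) (Ioi 0) :=
  (K.pow_integrable (by rw [le_div_iff₀ hη]; linarith)).const_mul _

lemma γη_integral (K : Kernel) : ∀ᶠ η in 𝓝[>] (0:ℝ), ∫ z in Ioi (0:ℝ), K.γη η z = 1 := by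
  filter_upwards [K.nu_mul_c_tendsto.eventually (lt_mem_nhds one_pos)] with η hη
  have hc : K.c η ≠ 0 := fun h => by simp [h] at hη
  simp only [γη]
  rw [integral_const_mul]
  have : (∫ z in Ioi (0:ℝ), K.γ z ^ (1/η)) ≠ 0 := fun h => hc (by rw [Kernel.c, h, inv_zero])
  rw [Kernel.c, inv_mul_cancel₀ this]

/-- The scaled kernel is close to the exponential one: negligible mass away from the origin and
first moment difference `o(ν)` near the origin. -/
lemma exists_approx (K : Kernel) : ∃ δ₀, 0 < δ₀ ∧
    Tendsto (fun η => ∫ z in Ioi δ₀, |K.γη η z - ek (K.nu η) z|) (𝓝[>] 0) (𝓝 0) ∧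
    Tendsto (fun η => (1/K.nu η) * ∫ z in Ioc 0 δ₀, |K.γη η z - ek (K.nu η) z| * (z + K.nu η))
      (𝓝[>] 0) (𝓝 0) := by
  obtain ⟨δ₀, hδ₀, h1, h2⟩ := K.exists_decay
  have hev : ∀ᶠ η in 𝓝[>] (0:ℝ), η ≤ 1 :=
    mem_nhdsWithin_of_mem_nhds (Iic_mem_nhds one_pos)
  refine ⟨δ₀, hδ₀, ?_, ?_⟩
  · have t1 := K.nu_mul_c_tendsto.mul (K.tail_tendsto hδ₀ h2)
    have t2 : Tendsto (fun η => Real.exp (-δ₀ / K.nu η)) (𝓝[>] 0) (𝓝 0) := by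
      refine Real.tendsto_exp_atBot.comp ?_
      have : Tendsto (fun η => (K.nu η)⁻¹) (𝓝[>] 0) atTop :=
        tendsto_inv_nhdsGT_zero.comp K.nu_tendsto
      have := this.const_mul_atTop_of_neg (by linarith : -δ₀ < 0)
      simpa only [div_eq_mul_inv] using this
    have t3 := t1.add t2
    simp only [mul_zero, add_zero] at t3
    refine tendsto_of_tendsto_of_tendsto_of_le_of_le' tendsto_const_nhds t3
      (Eventually.of_forall fun η => integral_nonneg fun _ => abs_nonneg _) ?_
    filter_upwards [eventually_mem_nhdsWithin, hev] with η hη hη1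
    have hν := K.nu_pos hη
    have hsub : Ioi δ₀ ⊆ Ioi (0:ℝ) := Ioi_subset_Ioi hδ₀.le
    have i1 := (K.γη_integrable hη hη1).mono_set hsub
    have i2 := (ek_integrable hν).mono_set hsub
    have e2 : ∫ z in Ioi δ₀, ek (K.nu η) z = Real.exp (-δ₀ / K.nu η) := by
      have h := integral_exp_mul_Ioi (a := -1/K.nu η) (by rw [neg_div]; simpa using hν) δ₀
      have h2 : ∀ z, ek (K.nu η) z = (1/K.nu η) * Real.exp (-1/K.nu η*z) := by
        intro z; simp only [ek]; congr 2; ring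
      simp_rw [h2]
      rw [integral_const_mul, h]
      rw [show -1 / K.nu η * δ₀ = -δ₀ / K.nu η by ring]
      field_simp
    calc ∫ z in Ioi δ₀, |K.γη η z - ek (K.nu η) z|
        ≤ ∫ z in Ioi δ₀, (K.γη η z + ek (K.nu η) z) := by
          refine setIntegral_mono_on (i1.sub i2).abs (i1.add i2) measurableSet_Ioi fun z hz => ?_
          refine (abs_sub _ _).trans (le_of_eq ?_)
          rw [abs_of_nonneg (K.γη_nonneg η (hδ₀.trans hz).le), abs_of_nonneg (ek_nonneg hν z)]
      _ = (∫ z in Ioi δ₀, K.γη η z) + Real.exp (-δ₀ / K.nu η) := by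
          rw [integral_add i1 i2, e2]
      _ = _ := by
          simp only [γη]
          rw [integral_const_mul]
          field_simp
  · have hsub : ∀ᶠ η in 𝓝[>] (0:ℝ), (∫ s in Ioi (0:ℝ), (if K.nu η * s ≤ δ₀ then
        |K.nu η * K.c η * K.γ (K.nu η * s) ^ (1/η) - Real.exp (-s)| * (s + 1) else 0))
        = (1/K.nu η) * ∫ z in Ioc 0 δ₀, |K.γη η z - ek (K.nu η) z| * (z + K.nu η) := by
      filter_upwards [eventually_mem_nhdsWithin] with η hη
      have hν := K.nu_pos hη
      rw [integral_subst hν, ← mul_assoc, one_div_mul_cancel hν.ne', one_mul]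
      congr 1; ext s
      split_ifs
      · have e : K.γη η (K.nu η * s) - ek (K.nu η) (K.nu η * s) =
          (K.nu η)⁻¹ * (K.nu η * K.c η * K.γ (K.nu η * s) ^ (1/η) - Real.exp (-s)) := by
          simp only [γη, ek]
          rw [show -(K.nu η * s) / K.nu η = -s by field_simp]
          field_simp
        rw [e, abs_mul, abs_of_pos (inv_pos.2 hν)]
        field_simp
      · rfl
    refine Tendsto.congr' hsub ?_
    have h0 : ∫ s in Ioi (0:ℝ), (0:ℝ) = 0 := by simp
    suffices hs : Tendsto (fun η => ∫ s in Ioi (0:ℝ), (if K.nu η * s ≤ δ₀ then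
        |K.nu η * K.c η * K.γ (K.nu η * s) ^ (1/η) - Real.exp (-s)| * (s + 1) else 0)) (𝓝[>] 0)
        (𝓝 (∫ s in Ioi (0:ℝ), (0:ℝ))) by rwa [h0] at hs
    refine tendsto_integral_filter_of_dominated_convergence
      (fun s => 12 * Real.exp (-(1/4) * s)) ?_ ?_ (integrable_exp_quarter.const_mul 12) ?_
    · filter_upwards [eventually_mem_nhdsWithin] with η hη
      have hm : MeasurableSet {s : ℝ | K.nu η * s ≤ δ₀} :=
        measurableSet_le (by fun_prop) measurable_const
      have h3 := K.aesm_scaled (K.nu_pos hη) (1/η)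
      have h4 : AEMeasurable (fun s => |K.nu η * K.c η * K.γ (K.nu η * s) ^ (1/η)
          - Real.exp (-s)| * (s + 1)) (volume.restrict (Ioi 0)) := by
        refine AEMeasurable.mul ?_ (by fun_prop)
        exact ((h3.const_mul _).sub (by fun_prop)).abs
      exact (h4.indicator hm).aestronglyMeasurable
    · filter_upwards [eventually_mem_nhdsWithin,
        K.nu_mul_c_tendsto.eventually (gt_mem_nhds one_lt_two)] with η hη hC
      filter_upwards [ae_restrict_mem measurableSet_Ioi] with s hs
      have hs : 0 < s := hs
      have hν := K.nu_pos hη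
      split_ifs with hle
      · have hnn := Real.rpow_nonneg (K.nonneg _ (mul_pos hν hs).le) (1/η)
        have hb := K.pow_le_exp h1 hη hs hle
        have hC0 : 0 ≤ K.nu η * K.c η := mul_nonneg hν.le (K.c_nonneg η)
        have ha : |K.nu η * K.c η * K.γ (K.nu η * s) ^ (1/η) - Real.exp (-s)|
            ≤ 3 * Real.exp (-s/2) := by
          have : Real.exp (-s) ≤ Real.exp (-s/2) := Real.exp_le_exp.2 (by linarith)
          have hm : K.nu η * K.c η * K.γ (K.nu η * s) ^ (1/η) ≤ 2 * Real.exp (-s/2) :=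
            mul_le_mul hC.le hb hnn (by norm_num)
          refine (abs_sub _ _).trans ?_
          rw [abs_of_nonneg (mul_nonneg hC0 hnn), abs_of_pos (Real.exp_pos _)]
          linarith
        have hs4 : s + 1 ≤ 4 * Real.exp (s/4) := by
          linarith [Real.add_one_le_exp (s/4)]
        rw [Real.norm_eq_abs, abs_mul, abs_abs, abs_of_pos (by linarith : 0 < s + 1)]
        calc _ ≤ 3 * Real.exp (-s/2) * (4 * Real.exp (s/4)) :=
              mul_le_mul ha hs4 (by linarith) (by positivity)
          _ = 12 * (Real.exp (-s/2) * Real.exp (s/4)) := by ring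
          _ = _ := by rw [← Real.exp_add]; congr 2; ring
      · simp [Real.exp_nonneg]
    · filter_upwards [ae_restrict_mem measurableSet_Ioi] with s hs
      have t : Tendsto (fun η => |K.nu η * K.c η * K.γ (K.nu η * s) ^ (1/η) - Real.exp (-s)|
          * (s + 1)) (𝓝[>] 0) (𝓝 0) := by
        have := (((K.nu_mul_c_tendsto.mul (K.pow_tendsto_exp hs)).sub_const
          (Real.exp (-s))).abs).mul_const (s + 1)
        simpa using this
      refine t.congr' ?_
      filter_upwards [K.nu_mul_le_eventually hδ₀ s] with η hη
      rw [if_pos hη]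

end Kernel

/-! ### Differentiability of the nonlocal flux -/

/-- Convolving a bounded function with a bounded kernel of bounded variation gives a Lipschitz
function, with no regularity needed on the convolved function: translations act on the kernel. -/
lemma cv_lipschitz {g f : ℝ → ℝ} (hg : IntegrableOn g (Ioi 0)) {G M : ℝ}
    (hG : ∀ z ∈ Ioi (0:ℝ), |g z| ≤ G) (hbv : BoundedVariationOn g (Ioi 0))
    (hf : Continuous f) (hM : ∀ x, |f x| ≤ M) :
    ∃ C, LipschitzWith C (cv g f) := by
  have hM0 : 0 ≤ M := (abs_nonneg _).trans (hM 0)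
  have hG0 : 0 ≤ G := (abs_nonneg _).trans (hG 1 (mem_Ioi.2 one_pos))
  set TVg := (eVariationOn g (Ioi 0)).toReal with hTV
  have key : ∀ x h, 0 < h → |cv g f x - cv g f (x + h)| ≤ (G * M + M * TVg) * h := by
    intro x h hh
    have hi := cv_integrable hg hf hM x
    have hi2 := cv_integrable hg hf hM (x + h)
    have hshift : ∫ z in Ioi h, g z * f (x + z) = ∫ z in Ioi (0:ℝ), g (h + z) * f (x + h + z) := by
      rw [setIntegral_Ioi_shift]; simp only [add_assoc]
    have hgs : IntegrableOn (fun z => g (h + z)) (Ioi 0) := by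
      have h1 := (measurePreserving_add_left (volume : Measure ℝ) h).integrableOn_comp_preimage
        (measurableEmbedding_addLeft h) (f := g) (s := Ioi h)
      have h2 : (fun z => h + z) ⁻¹' Ioi h = Ioi 0 := by ext z; simp
      rw [h2] at h1
      exact h1.2 (hg.mono_set (Ioi_subset_Ioi hh.le))
    have hi3 : IntegrableOn (fun z => g (h + z) * f (x + h + z)) (Ioi 0) :=
      cv_integrable (k := fun z => g (h + z)) hgs hf hM (x + h)
    have hsplit : cv g f x = (∫ z in Ioc 0 h, g z * f (x + z)) + ∫ z in Ioi h, g z * f (x + z) := by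
      rw [← setIntegral_union Ioc_disjoint_Ioi_same measurableSet_Ioi
        (hi.mono_set Ioc_subset_Ioi_self) (hi.mono_set (Ioi_subset_Ioi hh.le)),
        Ioc_union_Ioi_eq_Ioi hh.le]
      rfl
    have hdiff : cv g f x - cv g f (x + h) = (∫ z in Ioc 0 h, g z * f (x + z)) +
        ∫ z in Ioi (0:ℝ), (g (z + h) - g z) * f (x + h + z) := by
      have : ∫ z in Ioi (0:ℝ), (g (z + h) - g z) * f (x + h + z)
          = (∫ z in Ioi (0:ℝ), g (h + z) * f (x + h + z)) - cv g f (x + h) := by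
        unfold cv
        rw [← integral_sub hi3 hi2]
        congr 1; ext z; rw [add_comm z h]; ring
      rw [this, hsplit, hshift]; ring
    have b1 : |∫ z in Ioc 0 h, g z * f (x + z)| ≤ G * M * h := by
      have := norm_setIntegral_le_of_norm_le_const (μ := volume) (s := Ioc 0 h) (C := G * M)
        (f := fun z => g z * f (x + z)) (by simp) (fun z hz => by
          rw [Real.norm_eq_abs, abs_mul]
          exact mul_le_mul (hG z hz.1) (hM _) (abs_nonneg _) hG0)
      simpa [Measure.real, hh.le] using this
    have b2 : |∫ z in Ioi (0:ℝ), (g (z + h) - g z) * f (x + h + z)| ≤ M * TVg * h := by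
      have hfi : IntegrableOn (fun z => g (z + h) - g z) (Ioi 0) := by
        simp only [add_comm _ h]; exact hgs.sub hg
      calc _ ≤ ∫ z in Ioi (0:ℝ), |(g (z + h) - g z) * f (x + h + z)| := abs_integral_le_integral_abs
        _ ≤ ∫ z in Ioi (0:ℝ), |g (z + h) - g z| * M := by
          refine integral_mono_of_nonneg (ae_of_all _ fun _ => abs_nonneg _)
            (hfi.abs.mul_const M) (ae_of_all _ fun z => ?_)
          simp only [abs_mul]
          exact mul_le_mul_of_nonneg_left (hM _) (abs_nonneg _)
        _ = (∫ z in Ioi (0:ℝ), |g (z + h) - g z|) * M := integral_mul_const _ _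
        _ ≤ (h * TVg) * M := by
          refine mul_le_mul_of_nonneg_right ?_ hM0
          have e := ofReal_integral_norm_eq_lintegral_enorm hfi
          simp only [Real.norm_eq_abs] at e
          have l := lintegral_shift_le g 0 hh
          rw [← e] at l
          rw [← ENNReal.ofReal_toReal hbv, ← ENNReal.ofReal_mul hh.le] at l
          exact (ENNReal.ofReal_le_ofReal_iff (by positivity)).1 l
        _ = _ := by ring
    rw [hdiff]
    refine (abs_add_le _ _).trans ?_
    linarith
  refine ⟨(G * M + M * TVg).toNNReal, LipschitzWith.of_dist_le_mul fun x y => ?_⟩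
  have hc : 0 ≤ G * M + M * TVg := by positivity
  rw [Real.coe_toNNReal _ hc, Real.dist_eq, Real.dist_eq]
  rcases lt_trichotomy x y with hxy | hxy | hxy
  · have := key x (y - x) (sub_pos.2 hxy)
    rw [add_sub_cancel] at this
    rwa [abs_sub_comm x y, abs_of_pos (sub_pos.2 hxy)]
  · simp [hxy]
  · have := key y (x - y) (sub_pos.2 hxy)
    rw [add_sub_cancel] at this
    rwa [abs_of_pos (sub_pos.2 hxy), abs_sub_comm]

namespace Kernel

lemma γη_bounded_bv (K : Kernel) {η : ℝ} (hη : 0 < η) (hη1 : η ≤ 1) :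
    (∃ G, ∀ z ∈ Ioi (0:ℝ), |K.γη η z| ≤ G) ∧ BoundedVariationOn (K.γη η) (Ioi 0) := by
  have hp : 1 ≤ 1/η := by rw [le_div_iff₀ hη]; linarith
  set C := max 1 (K.γ K.δ) with hC
  have hmap : MapsTo K.γ (Ioi 0) (Icc 0 C) := by
    intro z hz
    refine ⟨K.nonneg z (le_of_lt hz), ?_⟩
    rcases eq_or_ne z K.δ with h | h
    · rw [h]; exact le_max_right _ _
    · exact (K.le_one hz h).trans (le_max_left _ _)
  have hcd : ContDiff ℝ 1 (fun x : ℝ => K.c η * x ^ (1/η)) :=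
    contDiff_const.mul (Real.contDiff_rpow_const_of_le (n := 1) (by simpa using hp))
  obtain ⟨L, hL⟩ := (hcd.locallyLipschitz.locallyLipschitzOn (s := Icc 0 C)
    ).exists_lipschitzOnWith_of_compact isCompact_Icc
  obtain ⟨G, -, hG⟩ := exists_bound_Icc hcd.continuous 0 C
  exact ⟨⟨G, fun z hz => hG _ (hmap hz)⟩, hL.comp_boundedVariationOn hmap K.bv⟩

end Kernel

/-- If the nonlocal flux `V(W)f`, with `W` Lipschitz, has a classical derivative `deriv F` equal
to a continuous function `-u` everywhere, then `F` really is differentiable: it is absolutely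
continuous, so it is the primitive of `-u`.  This is needed since `deriv` is zero at points of
non-differentiability. -/
lemma flux_hasDerivAt {V f w u : ℝ → ℝ} (hV : ContDiff ℝ 1 V) (hf : ContDiff ℝ 1 f)
    {C : NNReal} (hw : LipschitzWith C w) (hu : Continuous u)
    (h : ∀ x, u x + deriv (fun z => V (w z) * f z) x = 0) (x : ℝ) :
    HasDerivAt (fun z => V (w z) * f z) (-u x) x := by
  have hd : ∀ x, deriv (fun z => V (w z) * f z) x = -u x := fun x => by linarith [h x]
  have hac : ∀ a b, AbsolutelyContinuousOnInterval (fun z => V (w z) * f z) a b := by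
    intro a b
    obtain ⟨L1, h1⟩ := ((hV.locallyLipschitz.comp hw.locallyLipschitz).locallyLipschitzOn
      (s := uIcc a b)).exists_lipschitzOnWith_of_compact isCompact_uIcc
    obtain ⟨L2, h2⟩ := (hf.locallyLipschitz.locallyLipschitzOn
      (s := uIcc a b)).exists_lipschitzOnWith_of_compact isCompact_uIcc
    exact h1.absolutelyContinuousOnInterval.mul h2.absolutelyContinuousOnInterval
  have hF : (fun z => V (w z) * f z) = fun z => V (w 0) * f 0 + ∫ y in (0:ℝ)..z, -u y := by
    ext z
    have := (hac 0 z).integral_deriv_eq_sub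
    simp only [hd] at this
    linarith
  rw [hF]
  exact ((hu.neg).integral_hasStrictDerivAt 0 x).hasDerivAt.const_add _

/-! ### Integration in time -/

/-- Integral form of `∂ₜ E = (F - S F)/ν` for `E = S q` and `∂ₜ q = -∂ₓ F`.  With `A` the time
integral of `F` and `D` the increment of `q`, one has `A' = -D`, hence `S (A + ν D) = A`. -/
lemma time_increment {ν : ℝ} (hν : 0 < ν) {q u F : ℝ → ℝ → ℝ} {M CF t₁ t₂ : ℝ} (h12 : t₁ ≤ t₂)
    (hq : ∀ y t, HasDerivAt (fun s => q s y) (u t y) t)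
    (hu : Continuous fun p : ℝ × ℝ => u p.1 p.2)
    (hq1 : Continuous (q t₁)) (hq2 : Continuous (q t₂))
    (hM1 : ∀ y, |q t₁ y| ≤ M) (hM2 : ∀ y, |q t₂ y| ≤ M)
    (hFc : Continuous fun p : ℝ × ℝ => F p.1 p.2) (hFb : ∀ t x, |F t x| ≤ CF)
    (hFd : ∀ t ∈ Ioo t₁ t₂, ∀ x, HasDerivAt (F t) (-(u t x)) x) (x : ℝ) :
    cv (ek ν) (q t₂) x - cv (ek ν) (q t₁) x
      = ∫ s in t₁..t₂, (F s x - cv (ek ν) (F s) x)/ν := by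
  have hki := ek_integrable hν
  set A : ℝ → ℝ := fun y => ∫ s in t₁..t₂, F s y with hA
  set D : ℝ → ℝ := fun y => q t₂ y - q t₁ y with hD
  have hDc : Continuous D := hq2.sub hq1
  have hut : ∀ y, Continuous fun s => u s y := fun y =>
    hu.comp (by fun_prop : Continuous fun s : ℝ => (s, y))
  have hFt : ∀ y, Continuous fun s => F s y := fun y =>
    hFc.comp (by fun_prop : Continuous fun s : ℝ => (s, y))
  have hus : ∀ s, Continuous (u s) := fun s =>
    hu.comp (by fun_prop : Continuous fun y : ℝ => (s, y))
  have hD' : ∀ y, D y = ∫ s in t₁..t₂, u s y := fun y =>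
    (intervalIntegral.integral_eq_sub_of_hasDerivAt (fun t _ => hq y t)
      ((hut y).intervalIntegrable _ _)).symm
  have hAD : ∀ y, A y = A 0 + ∫ z in (0:ℝ)..y, -D z := by
    intro y
    have e1 : A y - A 0 = ∫ s in t₁..t₂, ∫ z in (0:ℝ)..y, -u s z := by
      simp only [hA]
      rw [← intervalIntegral.integral_sub ((hFt y).intervalIntegrable _ _)
        ((hFt 0).intervalIntegrable _ _)]
      refine intervalIntegral.integral_congr_ae_restrict ?_
      rw [uIoc_of_le h12, ← restrict_Ioo_eq_restrict_Ioc]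
      filter_upwards [ae_restrict_mem measurableSet_Ioo] with s hs
      exact (intervalIntegral.integral_eq_sub_of_hasDerivAt (fun z _ => hFd s hs z)
        ((hus s).neg.intervalIntegrable _ _)).symm
    have e2 : ∫ s in t₁..t₂, ∫ z in (0:ℝ)..y, -u s z
        = ∫ z in (0:ℝ)..y, ∫ s in t₁..t₂, -u s z := by
      refine intervalIntegral_intervalIntegral_swap ?_
      have hc : ContinuousOn (fun p : ℝ × ℝ => -u p.1 p.2) (uIcc t₁ t₂ ×ˢ uIcc 0 y) :=
        hu.neg.continuousOn
      have := hc.integrableOn_compact (μ := volume.prod volume)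
        (isCompact_uIcc.prod isCompact_uIcc)
      exact this.mono_set (prod_mono uIoc_subset_uIcc uIoc_subset_uIcc)
    have e3 : ∀ z, ∫ s in t₁..t₂, -u s z = -D z := fun z => by
      rw [intervalIntegral.integral_neg, hD']
    simp only [e3] at e2
    linarith
  have hAd : ∀ y, HasDerivAt A (-D y) y := by
    intro y
    rw [show A = fun y => A 0 + ∫ z in (0:ℝ)..y, -D z from funext hAD]
    exact ((hDc.neg).integral_hasStrictDerivAt 0 y).hasDerivAt.const_add _
  have hAc : Continuous A := continuous_iff_continuousAt.2 fun y => (hAd y).continuousAt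
  have hAb : ∀ y, |A y| ≤ CF * |t₂ - t₁| := fun y =>
    intervalIntegral.norm_integral_le_of_norm_le_const (f := fun s => F s y) fun s _ => hFb s y
  have hDb : ∀ y, |D y| ≤ M + M := fun y =>
    (abs_sub _ _).trans (add_le_add (hM2 y) (hM1 y))
  have hνDb : ∀ y, |ν * D y| ≤ ν * (M + M) := fun y => by
    rw [abs_mul, abs_of_pos hν]; exact mul_le_mul_of_nonneg_left (hDb y) hν.le
  have hinv := cv_ek_inv hν hAd hDc.neg hAb (N := CF * |t₂ - t₁| + ν * (M + M)) (fun y => by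
    rw [mul_neg, sub_neg_eq_add]
    exact (abs_add_le _ _).trans (add_le_add (hAb y) (hνDb y))) x
  have hlin : cv (ek ν) (fun y => A y - ν * -D y) x = cv (ek ν) A x
      + ν * (cv (ek ν) (q t₂) x - cv (ek ν) (q t₁) x) := by
    have := cv_sub hki hAc (g := fun y => ν * -D y) (by fun_prop) hAb
      (N := ν * (M + M)) (fun y => by rw [mul_neg, abs_neg]; exact hνDb y) x
    rw [this, ← cv_sub hki hq2 hq1 hM2 hM1, cv_const_mul]
    have h2 : cv (ek ν) (fun y => -D y) x = - cv (ek ν) D x := by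
      simp only [cv, mul_neg, integral_neg]
    rw [h2]; ring
  have hSA : cv (ek ν) A x = ∫ s in t₁..t₂, cv (ek ν) (F s) x := by
    simp only [hA, cv]
    rw [intervalIntegral_integral_swap]
    · congr 1; ext z
      rw [intervalIntegral.integral_const_mul]
    · have h1 : Integrable (fun _ : ℝ => (1:ℝ)) (volume.restrict (uIoc t₁ t₂)) := by
        refine integrable_const_iff.2 (Or.inr ?_)
        rw [isFiniteMeasure_restrict]
        simp [uIoc]
      have h2 := h1.mul_prod hki
      have h3 : Integrable (fun z : ℝ × ℝ => (1 * ek ν z.2) * F z.1 (x + z.2))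
          ((volume.restrict (uIoc t₁ t₂)).prod (volume.restrict (Ioi 0))) := by
        refine h2.mul_bdd (c := CF) ?_ (ae_of_all _ fun p => hFb _ _)
        exact (hFc.comp (by fun_prop : Continuous fun p : ℝ × ℝ =>
          (p.1, x + p.2))).aestronglyMeasurable
      simpa [Function.uncurry_def] using h3
  have hSFc : Continuous fun s => cv (ek ν) (F s) x := by
    unfold cv
    exact continuous_kernel_integral hki (g := fun s z => F s (x + z))
      (hFc.comp (by fun_prop : Continuous fun p : ℝ × ℝ => (p.1, x + p.2))) (fun s z => hFb _ _)
  rw [intervalIntegral.integral_div, intervalIntegral.integral_sub ((hFt x).intervalIntegrable _ _)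
    (hSFc.intervalIntegrable _ _), ← hSA, eq_div_iff hν.ne']
  rw [hlin] at hinv
  change _ = A x - _
  linarith

/-- Testing `∂ₜ E = P` with `α'(E) φ`: a lower bound for the spatial entropy production at each
time integrates to the weak entropy inequality with the same defect. -/
lemma weak_of_spatial {T : ℝ} (hT : 0 ≤ T) {E P φ φt φx : ℝ → ℝ → ℝ} {α α' β : ℝ → ℝ}
    (hE : Continuous fun p : ℝ × ℝ => E p.1 p.2) (hP : Continuous fun p : ℝ × ℝ => P p.1 p.2)
    (hEd : ∀ x, ∀ t ∈ Ioo 0 T, HasDerivAt (fun s => E s x) (P t x) t)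
    (hα : ∀ s, HasDerivAt α (α' s) s) (hα' : Continuous α') (hβ : Continuous β)
    (hφ : Continuous fun p : ℝ × ℝ => φ p.1 p.2) (hφtc : Continuous fun p : ℝ × ℝ => φt p.1 p.2)
    (hφxc : Continuous fun p : ℝ × ℝ => φx p.1 p.2)
    (hφt : ∀ t x, HasDerivAt (fun s => φ s x) (φt t x) t) (hφT : ∀ x, φ T x = 0) {a err : ℝ}
    (hsp : ∀ t ∈ Ioo 0 T, -err ≤
      ∫ x in (-a)..a, (β (E t x) * φx t x - φ t x * α' (E t x) * P t x)) :
    -(T * err) ≤ (∫ t in (0:ℝ)..T, ∫ x in (-a)..a,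
        (α (E t x) * φt t x + β (E t x) * φx t x)) + ∫ x in (-a)..a, α (E 0 x) * φ 0 x := by
  have hαc : Continuous α := continuous_iff_continuousAt.2 fun y => (hα y).continuousAt
  have c1 : Continuous fun p : ℝ × ℝ => α (E p.1 p.2) * φt p.1 p.2 := by fun_prop
  have c2 : Continuous fun p : ℝ × ℝ => β (E p.1 p.2) * φx p.1 p.2 := by fun_prop
  have c3 : Continuous fun p : ℝ × ℝ => φ p.1 p.2 * α' (E p.1 p.2) * P p.1 p.2 := by fun_prop
  have c13 : Continuous fun p : ℝ × ℝ => α (E p.1 p.2) * φt p.1 p.2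
      + φ p.1 p.2 * α' (E p.1 p.2) * P p.1 p.2 := c1.add c3
  have c23 : Continuous fun p : ℝ × ℝ => β (E p.1 p.2) * φx p.1 p.2
      - φ p.1 p.2 * α' (E p.1 p.2) * P p.1 p.2 := c2.sub c3
  have c0 : Continuous fun p : ℝ × ℝ => α (E p.1 p.2) * φ p.1 p.2 := by fun_prop
  have sx : ∀ (f : ℝ × ℝ → ℝ), Continuous f → ∀ t, Continuous fun x => f (t, x) :=
    fun f hf t => hf.comp (by fun_prop)
  have st : ∀ (f : ℝ × ℝ → ℝ), Continuous f → ∀ x, Continuous fun t => f (t, x) :=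
    fun f hf x => hf.comp (by fun_prop)
  have si : ∀ (f : ℝ × ℝ → ℝ), Continuous f → Continuous fun t => ∫ x in (-a)..a, f (t, x) :=
    fun f hf => intervalIntegral.continuous_parametric_intervalIntegral_of_continuous'
      (f := fun t x => f (t, x)) (by simpa [Function.uncurry_def] using hf) _ _
  have hpt : ∀ x, ∫ t in (0:ℝ)..T, (α (E t x) * φt t x + φ t x * α' (E t x) * P t x)
      = -(α (E 0 x) * φ 0 x) := by
    intro x
    have h := intervalIntegral.integral_eq_sub_of_hasDerivAt_of_le hT
      (f := fun t => α (E t x) * φ t x)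
      (f' := fun t => α (E t x) * φt t x + φ t x * α' (E t x) * P t x)
      ((st _ c0 x).continuousOn) (fun t ht => by
        refine (((hα (E t x)).comp t (hEd x t ht)).mul (hφt t x)).congr_deriv ?_
        simp only [Function.comp]; ring)
      (((st _ c1 x).add (st _ c3 x)).intervalIntegrable _ _)
    rw [h, hφT]; ring
  have hswap : ∫ t in (0:ℝ)..T, ∫ x in (-a)..a, (α (E t x) * φt t x + φ t x * α' (E t x) * P t x)
      = -∫ x in (-a)..a, α (E 0 x) * φ 0 x := by
    rw [intervalIntegral_intervalIntegral_swap]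
    · simp only [hpt]
      rw [intervalIntegral.integral_neg]
    · have hc : ContinuousOn (fun p : ℝ × ℝ => α (E p.1 p.2) * φt p.1 p.2
          + φ p.1 p.2 * α' (E p.1 p.2) * P p.1 p.2) (uIcc 0 T ×ˢ uIcc (-a) a) :=
        c13.continuousOn
      have := hc.integrableOn_compact (μ := volume.prod volume)
        (isCompact_uIcc.prod isCompact_uIcc)
      exact this.mono_set (prod_mono uIoc_subset_uIcc uIoc_subset_uIcc)
  have hlow : -(T * err) ≤ ∫ t in (0:ℝ)..T, ∫ x in (-a)..a,
      (β (E t x) * φx t x - φ t x * α' (E t x) * P t x) := by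
    have : ∫ t in (0:ℝ)..T, (-err) = -(T * err) := by simp
    rw [← this]
    refine intervalIntegral.integral_mono_on_of_le_Ioo hT (by simp)
      ((si _ c23).intervalIntegrable _ _) hsp
  have hsplit : ∫ t in (0:ℝ)..T, ∫ x in (-a)..a, (α (E t x) * φt t x + β (E t x) * φx t x)
      = (∫ t in (0:ℝ)..T, ∫ x in (-a)..a, (α (E t x) * φt t x + φ t x * α' (E t x) * P t x))
        + ∫ t in (0:ℝ)..T, ∫ x in (-a)..a,
          (β (E t x) * φx t x - φ t x * α' (E t x) * P t x) := by
    rw [← intervalIntegral.integral_add ((si _ c13).intervalIntegrable _ _)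
      ((si _ c23).intervalIntegrable _ _)]
    congr 1; ext t
    rw [← intervalIntegral.integral_add ((sx _ c13 t).intervalIntegrable _ _)
      ((sx _ c23 t).intervalIntegrable _ _)]
    congr 1; ext x; ring
  rw [hsplit, hswap]
  linarith

/-! ### The approximate entropy inequality for one solution -/

/-- Approximate entropy inequality for one nonlocal solution: the exponential average `E = S q`
satisfies the weak entropy inequality up to a defect controlled by `ν` and by the distance
`(ρ, τ)` between the kernel `g` and the exponential kernel. -/
lemma weak_nonlocal {ν : ℝ} (hν : 0 < ν) {g : ℝ → ℝ} (hg : IntegrableOn g (Ioi 0))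
    (hg0 : ∀ z ∈ Ioi (0:ℝ), 0 ≤ g z) (hg1 : ∫ z in Ioi (0:ℝ), g z = 1)
    {G : ℝ} (hG : ∀ z ∈ Ioi (0:ℝ), |g z| ≤ G) (hgbv : BoundedVariationOn g (Ioi 0))
    {δ ρ τ : ℝ} (hδ : 0 < δ) (hρ : ∫ z in Ioi δ, |g z - ek ν z| ≤ ρ)
    (hτ : (1/ν) * ∫ z in Ioc 0 δ, |g z - ek ν z| * (z + ν) ≤ τ)
    {V : ℝ → ℝ} (hV : ContDiff ℝ 1 V) (hV' : ∀ s, deriv V s ≤ 0)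
    {T : ℝ} (hT : 0 < T) {q : ℝ → ℝ → ℝ} {M B : ℝ} (hB0 : 0 ≤ B)
    (hqs : ContDiff ℝ (⊤ : ℕ∞) (fun p : ℝ × ℝ => q p.1 p.2))
    (hqM : ∀ t ∈ Icc 0 T, ∀ x, q t x ∈ Icc 0 M)
    (hPDE : ∀ t ∈ Ioo 0 T, ∀ x, deriv (fun s => q s x) t
      + deriv (fun z => V (cv g (q t) z) * q t z) x = 0)
    (hTV : ∀ t ∈ Icc 0 T, eVariationOn (cv (ek ν) (q t)) univ ≤ ENNReal.ofReal B)
    {α β : ℝ → ℝ} (hα : ContDiff ℝ 2 α) (hαc : ConvexOn ℝ univ α) (hβ : ContDiff ℝ 1 β)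
    (hβd : ∀ s, deriv β s = deriv α s * (V s + s * deriv V s))
    {A1 A2 LH L : ℝ} (hA1 : ∀ s ∈ Icc 0 M, |deriv α s| ≤ A1)
    (hA2 : ∀ s ∈ Icc 0 M, |deriv (deriv α) s| ≤ A2)
    (hLH : ∀ s ∈ Icc 0 M, |deriv α s * (s * deriv V s)| ≤ LH)
    (hL0 : 0 ≤ L) (hL : ∀ s ∈ Icc 0 M, ∀ r ∈ Icc 0 M, |V s - V r| ≤ L * |s - r|)
    {φ φt φx : ℝ → ℝ → ℝ} (hφ : Continuous fun p : ℝ × ℝ => φ p.1 p.2)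
    (hφtc : Continuous fun p : ℝ × ℝ => φt p.1 p.2)
    (hφxc : Continuous fun p : ℝ × ℝ => φx p.1 p.2)
    (hφt : ∀ t x, HasDerivAt (fun s => φ s x) (φt t x) t)
    (hφx : ∀ t x, HasDerivAt (φ t) (φx t x) x)
    (hφT : ∀ x, φ T x = 0) (hφ0 : ∀ t x, 0 ≤ φ t x) {Φ Φ' : ℝ} (hΦ : ∀ t x, φ t x ≤ Φ)
    (hΦ' : ∀ t x, |φx t x| ≤ Φ')
    {a : ℝ} (ha : 0 < a) (hφa : ∀ t, φ t a = 0) (hφa' : ∀ t, φ t (-a) = 0) :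
    -(T * (Φ' * LH * ν * (B + M) + (L * M * (2 * M * ρ + B * τ)) *
        (2 * a * Φ' * A1 + Φ * A2 * B))) ≤
      (∫ t in (0:ℝ)..T, ∫ x in (-a)..a,
        (α (cv (ek ν) (q t) x) * φt t x + β (cv (ek ν) (q t) x) * φx t x))
      + ∫ x in (-a)..a, α (cv (ek ν) (q 0) x) * φ 0 x := by
  have hki := ek_integrable hν
  -- time is clamped to `[0,T]` so that bounds and continuity hold globally
  set c : ℝ → ℝ := fun t => max 0 (min t T) with hc
  have hcc : Continuous c := by fun_prop
  have hcm : ∀ t, c t ∈ Icc 0 T := fun t => ⟨le_max_left _ _, max_le hT.le (min_le_right _ _)⟩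
  have hci : ∀ t ∈ Icc 0 T, c t = t := fun t ht => by
    simp only [hc]; rw [min_eq_left ht.2, max_eq_right ht.1]
  have hqc : Continuous fun p : ℝ × ℝ => q p.1 p.2 := hqs.continuous
  have hqt : ∀ t, Continuous (q t) := fun t =>
    hqc.comp (by fun_prop : Continuous fun x : ℝ => (t, x))
  have hM0 : 0 ≤ M := (hqM _ (hcm 0) 0).1.trans (hqM _ (hcm 0) 0).2
  have hqb : ∀ t ∈ Icc 0 T, ∀ x, |q t x| ≤ M := fun t ht x =>
    abs_le.2 ⟨by linarith [(hqM t ht x).1], (hqM t ht x).2⟩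
  have hshift : Continuous fun p : (ℝ × ℝ) × ℝ => q (c p.1.1) (p.1.2 + p.2) :=
    hqc.comp (by fun_prop : Continuous fun p : (ℝ × ℝ) × ℝ => (c p.1.1, p.1.2 + p.2))
  set E : ℝ → ℝ → ℝ := fun t x => cv (ek ν) (q (c t)) x with hE
  have hEc : Continuous fun p : ℝ × ℝ => E p.1 p.2 := by
    simp only [hE, cv]
    exact continuous_kernel_integral hki (g := fun (p : ℝ × ℝ) z => q (c p.1) (p.2 + z)) hshift
      (fun p z => hqb _ (hcm _) _)
  have hWc : Continuous fun p : ℝ × ℝ => cv g (q (c p.1)) p.2 := by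
    simp only [cv]
    exact continuous_kernel_integral hg (g := fun (p : ℝ × ℝ) z => q (c p.1) (p.2 + z)) hshift
      (fun p z => hqb _ (hcm _) _)
  have hWm : ∀ t x, cv g (q (c t)) x ∈ Icc 0 M := fun t x =>
    cv_mem hg hg0 hg1 (hqt _) (hqM _ (hcm t)) x
  obtain ⟨CV, hCV0, hCV⟩ := exists_bound_Icc hV.continuous 0 M
  set F : ℝ → ℝ → ℝ := fun t x => V (cv g (q (c t)) x) * q (c t) x with hF
  have hFc : Continuous fun p : ℝ × ℝ => F p.1 p.2 :=
    (hV.continuous.comp hWc).mul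
      (hqc.comp (by fun_prop : Continuous fun p : ℝ × ℝ => (c p.1, p.2)))
  have hFb : ∀ t x, |F t x| ≤ CV * M := fun t x => by
    simp only [hF]; rw [abs_mul]
    exact mul_le_mul (hCV _ (hWm t x)) (hqb _ (hcm t) x) (abs_nonneg _) hCV0
  have hFt : ∀ t, Continuous (F t) := fun t =>
    hFc.comp (by fun_prop : Continuous fun x : ℝ => (t, x))
  have hSFc : Continuous fun p : ℝ × ℝ => cv (ek ν) (F p.1) p.2 := by
    simp only [cv]
    exact continuous_kernel_integral hki (g := fun (p : ℝ × ℝ) z => F p.1 (p.2 + z))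
      (hFc.comp (by fun_prop : Continuous fun p : (ℝ × ℝ) × ℝ => (p.1.1, p.1.2 + p.2)))
      (fun p z => hFb _ _)
  set P : ℝ → ℝ → ℝ := fun t x => (F t x - cv (ek ν) (F t) x)/ν with hP
  have hPc : Continuous fun p : ℝ × ℝ => P p.1 p.2 := (hFc.sub hSFc).div_const _
  -- the classical time derivative of `q`
  set u : ℝ → ℝ → ℝ := fun t x => fderiv ℝ (fun p : ℝ × ℝ => q p.1 p.2) (t, x) (1, 0) with hu
  have hqd : ∀ y t, HasDerivAt (fun s => q s y) (u t y) t := by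
    intro y t
    have h1 := ((hqs.differentiable (by simp)) (t, y)).hasFDerivAt
    have h2 : HasDerivAt (fun s : ℝ => (s, y)) ((1:ℝ), (0:ℝ)) t :=
      (hasDerivAt_id t).prodMk (hasDerivAt_const t y)
    exact h1.comp_hasDerivAt t h2
  have huc : Continuous fun p : ℝ × ℝ => u p.1 p.2 :=
    (hqs.continuous_fderiv (by simp)).clm_apply continuous_const
  have hqx : ∀ t, ContDiff ℝ 1 (q t) := fun t =>
    (hqs.of_le (by exact_mod_cast le_top)).comp (contDiff_const.prodMk contDiff_id)
  have hFd : ∀ t ∈ Ioo 0 T, ∀ x, HasDerivAt (F t) (-(u t x)) x := by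
    intro t ht x
    have hct : c t = t := hci t (Ioo_subset_Icc_self ht)
    obtain ⟨C, hC⟩ := cv_lipschitz hg hG hgbv (hqt t) (hqb t (Ioo_subset_Icc_self ht))
    have := flux_hasDerivAt hV (hqx t) hC (u := u t)
      (huc.comp (by fun_prop : Continuous fun x : ℝ => (t, x)))
      (fun y => by rw [← (hqd y t).deriv]; exact hPDE t ht y) x
    simpa only [hF, hct] using this
  have hEd : ∀ x, ∀ t ∈ Ioo 0 T, HasDerivAt (fun s => E s x) (P t x) t := by
    intro x t ht
    have hPt : Continuous fun s => P s x :=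
      hPc.comp (by fun_prop : Continuous fun s : ℝ => (s, x))
    have hfi : ∀ s ∈ Ioo 0 T, E s x = E 0 x + ∫ r in (0:ℝ)..s, P r x := by
      intro s hs
      have h0 : c 0 = 0 := hci 0 ⟨le_rfl, hT.le⟩
      have h1 : c s = s := hci s (Ioo_subset_Icc_self hs)
      have := time_increment hν hs.1.le hqd huc (hqt 0) (hqt s) (hqb 0 ⟨le_rfl, hT.le⟩)
        (hqb s (Ioo_subset_Icc_self hs)) hFc hFb
        (fun r hr => hFd r ⟨hr.1, hr.2.trans hs.2⟩) x
      simp only [hE, h0, h1, hP]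
      linarith
    refine ((hPt.integral_hasStrictDerivAt 0 t).hasDerivAt.const_add (E 0 x)).congr_of_eventuallyEq ?_
    filter_upwards [Ioo_mem_nhds ht.1 ht.2] with s hs using hfi s hs
  have hαd : ∀ s, HasDerivAt α (deriv α s) s := fun s =>
    (hα.differentiable (by norm_num) s).hasDerivAt
  have hmain := weak_of_spatial hT.le hEc hPc hEd hαd (hα.continuous_deriv (by norm_num))
    hβ.continuous hφ hφtc hφxc hφt hφT (a := a)
    (err := Φ' * LH * ν * (B + M) + (L * M * (2 * M * ρ + B * τ)) *
        (2 * a * Φ' * A1 + Φ * A2 * B)) (by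
      intro t ht
      refine spatial_entropy hν (hqt (c t)) (hFt t) (hqM _ (hcm t)) (hFb t) hB0 (hTV _ (hcm t))
        hV hV' hα hαc hβ hβd hA1 hA2 hLH ?_ (hφx t)
        (hφxc.comp (by fun_prop : Continuous fun x : ℝ => (t, x))) (hφ0 t) (hΦ t) (hΦ' t)
        ha (hφa t) (hφa' t)
      intro x
      exact averaged_commutator_le hν hg hg0 hg1 hδ hρ hτ (hqt (c t)) (hqM _ (hcm t)) hB0
        (hTV _ (hcm t)) hV.continuous hL0 hL x)
  have h0 : c 0 = 0 := hci 0 ⟨le_rfl, hT.le⟩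
  have e1 : ∫ t in (0:ℝ)..T, ∫ x in (-a)..a, (α (E t x) * φt t x + β (E t x) * φx t x)
      = ∫ t in (0:ℝ)..T, ∫ x in (-a)..a,
        (α (cv (ek ν) (q t) x) * φt t x + β (cv (ek ν) (q t) x) * φx t x) := by
    refine intervalIntegral.integral_congr fun t ht => ?_
    rw [uIcc_of_le hT.le] at ht
    simp only [hE, hci t ht]
  rw [e1] at hmain
  simp only [hE, h0] at hmain
  exact hmain

/-! ### Passage to the limit in nonlinear functionals -/

lemma exists_lipschitz_Icc {f : ℝ → ℝ} (hf : ContDiff ℝ 1 f) (a b : ℝ) :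
    ∃ L, 0 ≤ L ∧ ∀ s ∈ Icc a b, ∀ r ∈ Icc a b, |f s - f r| ≤ L * |s - r| := by
  obtain ⟨L, hL⟩ := (hf.locallyLipschitz.locallyLipschitzOn (s := Icc a b)
    ).exists_lipschitzOnWith_of_compact isCompact_Icc
  exact ⟨L, L.2, fun s hs r hr => by simpa [Real.dist_eq] using hL.dist_le_mul s hs r hr⟩

/-- The exponential averages of a bounded continuous function converge to it as `ν → 0`. -/
lemma cv_ek_tendsto {f : ℝ → ℝ} (hf : Continuous f) {M : ℝ} (hM : ∀ x, |f x| ≤ M) (x : ℝ) :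
    Tendsto (fun ν => cv (ek ν) f x) (𝓝[>] 0) (𝓝 (f x)) := by
  have hc : Continuous fun ν : ℝ => ∫ z in Ioi (0:ℝ), ek 1 z * f (x + ν * z) :=
    continuous_kernel_integral (ek_integrable one_pos) (g := fun ν z => f (x + ν * z))
      (by fun_prop) (fun _ _ => hM _)
  have h0 : ∫ z in Ioi (0:ℝ), ek 1 z * f (x + 0 * z) = f x := by
    simp only [zero_mul, add_zero]
    rw [integral_mul_const, ek_integral one_pos, one_mul]
  have ht := (hc.tendsto 0).mono_left (nhdsWithin_le_nhds (s := Ioi (0:ℝ)))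
  rw [h0] at ht
  refine ht.congr' ?_
  filter_upwards [self_mem_nhdsWithin] with ν hν
  have hν : 0 < ν := hν
  have h := integral_comp_mul_left_Ioi (fun z => ek ν z * f (x + z)) 0 hν
  rw [mul_zero, smul_eq_mul] at h
  have h2 : cv (ek ν) f x = ν * ∫ z in Ioi (0:ℝ), ek ν (ν * z) * f (x + ν * z) := by
    rw [h, ← mul_assoc, mul_inv_cancel₀ hν.ne', one_mul]; rfl
  rw [h2, ← integral_const_mul]
  congr 1; ext z
  simp only [ek]
  rw [show -(ν * z)/ν = -z by field_simp, div_one]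
  field_simp

/-- Nonlinear functionals `∫ (α(e) w₁ + β(e) w₂)` with `α, β` of class `C¹` pass to the limit under
`L¹` convergence of uniformly bounded functions. -/
lemma tendsto_nonlinear {α β : ℝ → ℝ} (hα : ContDiff ℝ 1 α) (hβ : ContDiff ℝ 1 β)
    {w₁ w₂ : ℝ → ℝ} (hw₁ : Continuous w₁) (hw₂ : Continuous w₂) {C : ℝ}
    (hC₁ : ∀ x, |w₁ x| ≤ C) (hC₂ : ∀ x, |w₂ x| ≤ C) {a R : ℝ} (ha : 0 < a)
    {e : ℕ → ℝ → ℝ} {p : ℝ → ℝ} (hp : Measurable p) (hpR : ∀ x, p x ∈ Icc (-R) R)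
    (he : ∀ k, Continuous (e k)) (heR : ∀ k x, e k x ∈ Icc (-R) R)
    (hconv : Tendsto (fun k => ∫ x in Ioc (-a) a, |e k x - p x|) atTop (𝓝 0)) :
    Tendsto (fun k => ∫ x in (-a)..a, (α (e k x) * w₁ x + β (e k x) * w₂ x)) atTop
      (𝓝 (∫ x in (-a)..a, (α (p x) * w₁ x + β (p x) * w₂ x))) := by
  have haa : -a ≤ a := by linarith
  have hC0 : 0 ≤ C := (abs_nonneg _).trans (hC₁ 0)
  obtain ⟨L₁, hL₁0, hL₁⟩ := exists_lipschitz_Icc hα (-R) R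
  obtain ⟨L₂, hL₂0, hL₂⟩ := exists_lipschitz_Icc hβ (-R) R
  obtain ⟨D₁, hD₁0, hD₁⟩ := exists_bound_Icc hα.continuous (-R) R
  obtain ⟨D₂, hD₂0, hD₂⟩ := exists_bound_Icc hβ.continuous (-R) R
  have hfi : ∀ f : ℝ → ℝ, Measurable f → (∀ x, f x ∈ Icc (-R) R) →
      IntegrableOn (fun x => α (f x) * w₁ x + β (f x) * w₂ x) (Ioc (-a) a) := by
    intro f hf hfR
    refine IntegrableOn.of_bound (by simp) ?_ (D₁ * C + D₂ * C) (ae_of_all _ fun x => ?_)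
    · exact (((hα.continuous.measurable.comp hf).mul hw₁.measurable).add
        ((hβ.continuous.measurable.comp hf).mul hw₂.measurable)).aestronglyMeasurable
    · rw [Real.norm_eq_abs]
      refine (abs_add_le _ _).trans ?_
      rw [abs_mul, abs_mul]
      exact add_le_add (mul_le_mul (hD₁ _ (hfR x)) (hC₁ x) (abs_nonneg _) hD₁0)
        (mul_le_mul (hD₂ _ (hfR x)) (hC₂ x) (abs_nonneg _) hD₂0)
  have hbd : ∀ f : ℝ → ℝ, Measurable f → (∀ x, f x ∈ Icc (-R) R) →
      IntegrableOn f (Ioc (-a) a) := fun f hf hfR =>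
    IntegrableOn.of_bound (by simp) hf.aestronglyMeasurable R
      (ae_of_all _ fun x => abs_le.2 (hfR x))
  simp only [intervalIntegral.integral_of_le haa]
  rw [tendsto_iff_norm_sub_tendsto_zero]
  have hz := hconv.const_mul (L₁ * C + L₂ * C)
  rw [mul_zero] at hz
  refine squeeze_zero (fun _ => norm_nonneg _) (fun k => ?_) hz
  rw [← integral_sub (hfi _ (he k).measurable (heR k)) (hfi _ hp hpR), ← integral_const_mul]
  refine norm_integral_le_of_norm_le ((((hbd _ (he k).measurable (heR k)).sub
    (hbd _ hp hpR)).abs).const_mul _) (ae_of_all _ fun x => ?_)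
  rw [Real.norm_eq_abs, show α (e k x) * w₁ x + β (e k x) * w₂ x
    - (α (p x) * w₁ x + β (p x) * w₂ x) = (α (e k x) - α (p x)) * w₁ x
      + (β (e k x) - β (p x)) * w₂ x by ring]
  refine (abs_add_le _ _).trans ?_
  rw [abs_mul, abs_mul]
  have i1 := mul_le_mul (hL₁ _ (heR k x) _ (hpR x)) (hC₁ x) (abs_nonneg _)
    (mul_nonneg hL₁0 (abs_nonneg _))
  have i2 := mul_le_mul (hL₂ _ (heR k x) _ (hpR x)) (hC₂ x) (abs_nonneg _)
    (mul_nonneg hL₂0 (abs_nonneg _))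
  change _ ≤ (L₁ * C + L₂ * C) * |e k x - p x|
  linarith

/-- A `C¹` function of compact support in the plane, together with its partial derivatives, is
bounded and vanishes outside a vertical strip. -/
lemma test_function {φ : ℝ → ℝ → ℝ} (hφ : ContDiff ℝ 1 (fun p : ℝ × ℝ => φ p.1 p.2))
    (hs : HasCompactSupport (fun p : ℝ × ℝ => φ p.1 p.2)) :
    ∃ φt φx : ℝ → ℝ → ℝ, (Continuous fun p : ℝ × ℝ => φt p.1 p.2) ∧
      (Continuous fun p : ℝ × ℝ => φx p.1 p.2) ∧
      (∀ t x, HasDerivAt (fun s => φ s x) (φt t x) t) ∧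
      (∀ t x, HasDerivAt (φ t) (φx t x) x) ∧
      ∃ C, (∀ t x, |φ t x| ≤ C ∧ |φt t x| ≤ C ∧ |φx t x| ≤ C) ∧
      ∃ a, 0 < a ∧ ∀ t x, a ≤ |x| → φ t x = 0 ∧ φt t x = 0 ∧ φx t x = 0 := by
  set Ψ : ℝ × ℝ → ℝ := fun p => φ p.1 p.2 with hΨ
  have hfc : Continuous (fderiv ℝ Ψ) := hφ.continuous_fderiv (by simp)
  have hfs : HasCompactSupport (fderiv ℝ Ψ) := hs.fderiv ℝ
  obtain ⟨C₁, hC₁⟩ := hs.exists_bound_of_continuous hφ.continuous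
  obtain ⟨C₂, hC₂⟩ := hfs.exists_bound_of_continuous hfc
  have hd : ∀ t x, HasFDerivAt Ψ (fderiv ℝ Ψ (t, x)) (t, x) := fun t x =>
    (hφ.differentiable (by simp) (t, x)).hasFDerivAt
  obtain ⟨r, hr⟩ := hs.isBounded.subset_closedBall (0 : ℝ × ℝ)
  have hout : ∀ t x, max r 0 + 1 ≤ |x| → (t, x) ∉ tsupport Ψ := by
    intro t x hx hmem
    have := hr hmem
    rw [mem_closedBall_zero_iff, Prod.norm_def] at this
    have h2 : |x| ≤ r := (le_max_right _ _).trans this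
    linarith [le_max_left r 0]
  refine ⟨fun t x => fderiv ℝ Ψ (t, x) (1, 0), fun t x => fderiv ℝ Ψ (t, x) (0, 1),
    hfc.clm_apply continuous_const, hfc.clm_apply continuous_const, ?_, ?_, max C₁ C₂, ?_,
    max r 0 + 1, by positivity, ?_⟩
  · intro t x
    exact (hd t x).comp_hasDerivAt t ((hasDerivAt_id t).prodMk (hasDerivAt_const t x))
  · intro t x
    exact (hd t x).comp_hasDerivAt x ((hasDerivAt_const x t).prodMk (hasDerivAt_id x))
  · intro t x
    have hop : ∀ v : ℝ × ℝ, ‖v‖ = 1 → |fderiv ℝ Ψ (t, x) v| ≤ max C₁ C₂ := fun v hv => by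
      have := (fderiv ℝ Ψ (t, x)).le_opNorm v
      rw [hv, mul_one] at this
      exact this.trans ((hC₂ _).trans (le_max_right _ _))
    exact ⟨(hC₁ (t, x)).trans (le_max_left _ _), hop _ (by simp [Prod.norm_def]),
      hop _ (by simp [Prod.norm_def])⟩
  · intro t x hx
    have h1 := image_eq_zero_of_notMem_tsupport (hout t x hx)
    have h2 : fderiv ℝ Ψ (t, x) = 0 := by
      by_contra hne
      exact hout t x hx (support_fderiv_subset ℝ hne)
    exact ⟨h1, by simp [h2], by simp [h2]⟩

/-! ### The singular limit -/

/-- Theorem 7.1, entropy admissibility in the singular limit: let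
`η_k → 0⁺` and let `q_k` be nonnegative bounded smooth classical solutions of the
`η_k`-nonlocal conservation laws with fixed initial datum `q₀`, uniformly bounded by
`2‖q₀‖_{L∞}` and with `TV(E_k(t,·)) ≤ B` uniformly, where `E_k` is the exponential
surrogate with `ν_k = -η_k/γ'(0)`. If `q* ∈ L∞` is such that `E_k → q*` in
`C([0,T]; L¹_loc(ℝ))` (uniformly in `t` on each bounded interval), then `q*` satisfies the
entropy inequality for every convex `α ∈ C²`, entropy flux `β` with
`β' = α'·(V + (·)V')`, and every nonnegative `φ ∈ C¹_c((-∞,T)×ℝ)`. -/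
theorem entropy_admissibility_in_the_limit (K : Kernel) (hK : K.AC)
    (V : ℝ → ℝ) (hV : ContDiff ℝ 1 V) (hV' : ∀ s, deriv V s ≤ 0)
    (hVconc : StrictConcaveOn ℝ Set.univ (fun s => s * V s))
    (T : ℝ) (hT : 0 < T)
    (q₀ : ℝ → ℝ) (M₀ : ℝ) (hM₀ : 0 ≤ M₀) (hq₀ : ∀ x, q₀ x ∈ Set.Icc 0 M₀)
    (hq₀bv : BoundedVariationOn q₀ Set.univ)
    (η : ℕ → ℝ) (hηpos : ∀ k, 0 < η k) (hη0 : Filter.Tendsto η Filter.atTop (nhds 0))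
    (q : ℕ → ℝ → ℝ → ℝ)
    (hsmooth : ∀ k, ContDiff ℝ (⊤ : ℕ∞) (fun p : ℝ × ℝ => q k p.1 p.2))
    (hnonneg : ∀ k t x, 0 ≤ q k t x)
    (hinit : ∀ k x, q k 0 x = q₀ x)
    (hbound : ∀ k, ∀ t ∈ Set.Icc 0 T, ∀ x : ℝ, q k t x ≤ 2 * M₀)
    (hPDE : ∀ k, ∀ t ∈ Set.Ioo 0 T, ∀ x : ℝ,
      deriv (fun s => q k s x) t
        + deriv (fun z => V (Wop (K.γη (η k)) (q k t) z) * q k t z) x = 0)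
    (B : ℝ)
    (hTV : ∀ k, ∀ t ∈ Set.Icc 0 T,
      eVariationOn (Eop (-(η k) / K.dγ 0) (q k t)) Set.univ ≤ ENNReal.ofReal B)
    (qs : ℝ → ℝ → ℝ)
    (hqs_meas : Measurable fun p : ℝ × ℝ => qs p.1 p.2)
    (hqs_bdd : ∃ Ms, ∀ t x, |qs t x| ≤ Ms)
    (hconv : ∀ a b : ℝ, ∀ ε > (0:ℝ), ∃ N : ℕ, ∀ k ≥ N, ∀ t ∈ Set.Icc 0 T,
      (∫ x in Set.Ioc a b, |Eop (-(η k) / K.dγ 0) (q k t) x - qs t x|) ≤ ε) :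
    ∀ α β : ℝ → ℝ, ContDiff ℝ 2 α → ConvexOn ℝ Set.univ α → ContDiff ℝ 1 β →
      (∀ s, deriv β s = deriv α s * (V s + s * deriv V s)) →
      ∀ φ : ℝ → ℝ → ℝ, ContDiff ℝ 1 (fun p : ℝ × ℝ => φ p.1 p.2) →
        HasCompactSupport (fun p : ℝ × ℝ => φ p.1 p.2) →
        (∀ t x, 0 ≤ φ t x) → (∀ t, T ≤ t → ∀ x, φ t x = 0) →
        0 ≤ (∫ t in Set.Ioo 0 T, ∫ x : ℝ,
              (α (qs t x) * deriv (fun s => φ s x) t + β (qs t x) * deriv (φ t) x))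
            + ∫ x : ℝ, α (q₀ x) * φ 0 x := by
  intro α β hα hαc hβ hβd φ hφ hφs hφ0 hφT
  obtain ⟨φt, φx, hφtc, hφxc, hφt, hφx, C, hC, a, ha, hφa⟩ := test_function hφ hφs
  have haa : -a ≤ a := by linarith
  have hC0 : 0 ≤ C := (abs_nonneg _).trans (hC 0 0).1
  obtain ⟨Ms, hMs⟩ := hqs_bdd
  set M := 2 * M₀ with hM
  have hM0 : 0 ≤ M := by positivity
  set R := max M Ms with hR
  have hR0 : 0 ≤ R := hM0.trans (le_max_left _ _)
  have hsub : Icc 0 M ⊆ Icc (-R) R := fun s hs =>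
    ⟨by linarith [hs.1], hs.2.trans (le_max_left _ _)⟩
  have hα1 : ContDiff ℝ 1 α := hα.of_le (by norm_num)
  have hα' : ContDiff ℝ 1 (deriv α) :=
    ((contDiff_succ_iff_deriv (n := 1)).1 (by simpa [one_add_one_eq_two] using hα)).2.2
  obtain ⟨A1, hA10, hA1⟩ := exists_bound_Icc hα'.continuous 0 M
  obtain ⟨A2, hA20, hA2⟩ := exists_bound_Icc (hα'.continuous_deriv le_rfl) 0 M
  obtain ⟨LH, hLH0, hLH⟩ := exists_bound_Icc
    (hα'.continuous.mul (continuous_id.mul (hV.continuous_deriv le_rfl))) 0 M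
  obtain ⟨L, hL0, hL⟩ := exists_lipschitz_Icc hV 0 M
  obtain ⟨δ₀, hδ₀, hρ, hτ⟩ := K.exists_approx
  have hη : Tendsto η atTop (𝓝[>] 0) :=
    tendsto_nhdsWithin_iff.2 ⟨hη0, Eventually.of_forall hηpos⟩
  have hνη : ∀ k, -(η k) / K.dγ 0 = K.nu (η k) := fun _ => rfl
  have hEop : ∀ k t, Eop (-(η k) / K.dγ 0) (q k t) = cv (ek (K.nu (η k))) (q k t) :=
    fun k t => funext fun x => Eop_eq_cv' _ _ x
  have hWop : ∀ k t, Wop (K.γη (η k)) (q k t) = cv (K.γη (η k)) (q k t) :=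
    fun k t => funext fun x => Wop_eq_cv' _ _ x
  simp only [hEop] at hTV hconv
  simp only [hWop] at hPDE
  have hνpos : ∀ k, 0 < K.nu (η k) := fun k => K.nu_pos (hηpos k)
  have hqc : ∀ k, Continuous fun p : ℝ × ℝ => q k p.1 p.2 := fun k => (hsmooth k).continuous
  have hqt : ∀ k t, Continuous (q k t) := fun k t =>
    (hqc k).comp (by fun_prop : Continuous fun x : ℝ => (t, x))
  have hqM : ∀ k, ∀ t ∈ Icc 0 T, ∀ x, q k t x ∈ Icc 0 M := fun k t ht x =>
    ⟨hnonneg k t x, hbound k t ht x⟩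
  have hEM : ∀ k, ∀ t ∈ Icc 0 T, ∀ x, cv (ek (K.nu (η k))) (q k t) x ∈ Icc 0 M :=
    fun k t ht => cv_mem (ek_integrable (hνpos k)) (fun z _ => ek_nonneg (hνpos k) z)
      (ek_integral (hνpos k)) (hqt k t) (hqM k t ht)
  have hqb : ∀ k, ∀ t ∈ Icc 0 T, ∀ x, |q k t x| ≤ M := fun k t ht x =>
    abs_le.2 ⟨by linarith [(hqM k t ht x).1], (hqM k t ht x).2⟩
  have hEc : ∀ k, ∀ t ∈ Icc 0 T, Continuous (cv (ek (K.nu (η k))) (q k t)) := fun k t ht =>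
    cv_continuous (ek_integrable (hνpos k)) (hqt k t) (hqb k t ht)
  have hφtt : ∀ t, Continuous (φt t) := fun t =>
    hφtc.comp (by fun_prop : Continuous fun x : ℝ => (t, x))
  have hφxt : ∀ t, Continuous (φx t) := fun t =>
    hφxc.comp (by fun_prop : Continuous fun x : ℝ => (t, x))
  have hφc : ∀ t, Continuous (φ t) := fun t =>
    hφ.continuous.comp (by fun_prop : Continuous fun x : ℝ => (t, x))
  -- spatial integrals only see the strip `|x| ≤ a`
  have hstrip : ∀ h : ℝ → ℝ, (∀ x, a ≤ |x| → h x = 0) → ∫ x, h x = ∫ x in (-a)..a, h x := by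
    intro h hh
    refine (intervalIntegral.integral_eq_integral_of_support_subset fun x hx => ?_).symm
    have : |x| < a := by
      by_contra hge
      exact hx (hh x (not_lt.1 hge))
    exact ⟨(abs_lt.1 this).1, (abs_lt.1 this).2.le⟩
  have hgoal1 : (∫ t in Ioo 0 T, ∫ x : ℝ,
      (α (qs t x) * deriv (fun s => φ s x) t + β (qs t x) * deriv (φ t) x))
      = ∫ t in (0:ℝ)..T, ∫ x in (-a)..a, (α (qs t x) * φt t x + β (qs t x) * φx t x) := by
    rw [intervalIntegral.integral_of_le hT.le, ← integral_Ioc_eq_integral_Ioo]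
    congr 1; ext t
    rw [← hstrip _ fun x hx => by rw [(hφa t x hx).2.1, (hφa t x hx).2.2]; ring]
    congr 1; ext x
    rw [(hφt t x).deriv, (hφx t x).deriv]
  have hgoal2 : ∫ x : ℝ, α (q₀ x) * φ 0 x = ∫ x in (-a)..a, α (q₀ x) * φ 0 x :=
    hstrip _ fun x hx => by rw [(hφa 0 x hx).1]; ring
  rw [hgoal1, hgoal2]
  obtain ⟨Dα, hDα0, hDα⟩ := exists_bound_Icc hα.continuous 0 M
  obtain ⟨Dβ, hDβ0, hDβ⟩ := exists_bound_Icc hβ.continuous 0 M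
  -- convergence of the interior term
  have hlim1 : Tendsto (fun k => ∫ t in (0:ℝ)..T, ∫ x in (-a)..a,
      (α (cv (ek (K.nu (η k))) (q k t) x) * φt t x
        + β (cv (ek (K.nu (η k))) (q k t) x) * φx t x)) atTop
      (𝓝 (∫ t in (0:ℝ)..T, ∫ x in (-a)..a,
        (α (qs t x) * φt t x + β (qs t x) * φx t x))) := by
    refine intervalIntegral.tendsto_integral_filter_of_dominated_convergence
      (fun _ => (Dα * C + Dβ * C) * |a - -a|) ?_ ?_ (by simp) ?_
    · refine Eventually.of_forall fun k => ?_
      have m1 : StronglyMeasurable fun p : ℝ × ℝ => cv (ek (K.nu (η k))) (q k p.1) p.2 := by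
        have hc : Continuous fun p : (ℝ × ℝ) × ℝ =>
            ek (K.nu (η k)) p.2 * q k p.1.1 (p.1.2 + p.2) :=
          ((ek_continuous _).comp continuous_snd).mul ((hqc k).comp
            (by fun_prop : Continuous fun p : (ℝ × ℝ) × ℝ => (p.1.1, p.1.2 + p.2)))
        exact hc.stronglyMeasurable.integral_prod_right (ν := volume.restrict (Ioi 0))
      have m2 : StronglyMeasurable fun p : ℝ × ℝ =>
          α (cv (ek (K.nu (η k))) (q k p.1) p.2) * φt p.1 p.2
          + β (cv (ek (K.nu (η k))) (q k p.1) p.2) * φx p.1 p.2 :=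
        ((hα.continuous.comp_stronglyMeasurable m1).mul hφtc.stronglyMeasurable).add
          ((hβ.continuous.comp_stronglyMeasurable m1).mul hφxc.stronglyMeasurable)
      simp only [intervalIntegral.integral_of_le haa]
      exact (m2.integral_prod_right (ν := volume.restrict (Ioc (-a) a))).aestronglyMeasurable
    · refine Eventually.of_forall fun k => ae_of_all _ fun t ht => ?_
      rw [uIoc_of_le hT.le] at ht
      have ht' : t ∈ Icc 0 T := Ioc_subset_Icc_self ht
      refine intervalIntegral.norm_integral_le_of_norm_le_const fun x _ => ?_
      rw [Real.norm_eq_abs]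
      refine (abs_add_le _ _).trans ?_
      rw [abs_mul, abs_mul]
      exact add_le_add (mul_le_mul (hDα _ (hEM k t ht' x)) (hC t x).2.1 (abs_nonneg _) hDα0)
        (mul_le_mul (hDβ _ (hEM k t ht' x)) (hC t x).2.2 (abs_nonneg _) hDβ0)
    · refine ae_of_all _ fun t ht => ?_
      rw [uIoc_of_le hT.le] at ht
      have ht' : t ∈ Icc 0 T := Ioc_subset_Icc_self ht
      refine tendsto_nonlinear hα1 hβ (hφtt t) (hφxt t) (fun x => (hC t x).2.1)
        (fun x => (hC t x).2.2) ha (hqs_meas.comp measurable_prodMk_left)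
        (R := R) (fun x => abs_le.1 ((hMs t x).trans (le_max_right _ _)))
        (fun k => hEc k t ht') (fun k x => hsub (hEM k t ht' x)) ?_
      rw [Metric.tendsto_atTop]
      intro ε hε
      obtain ⟨N, hN⟩ := hconv (-a) a (ε/2) (by positivity)
      refine ⟨N, fun k hk => ?_⟩
      rw [Real.dist_eq, sub_zero, abs_of_nonneg (integral_nonneg fun _ => abs_nonneg _)]
      exact (hN k hk t ht').trans_lt (by linarith)
  -- convergence of the initial term
  have h0T : (0:ℝ) ∈ Icc 0 T := ⟨le_rfl, hT.le⟩
  have hq0 : ∀ k, q k 0 = q₀ := fun k => funext (hinit k)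
  have hlim2 : Tendsto (fun k => ∫ x in (-a)..a, α (cv (ek (K.nu (η k))) (q k 0) x) * φ 0 x)
      atTop (𝓝 (∫ x in (-a)..a, α (q₀ x) * φ 0 x)) := by
    refine intervalIntegral.tendsto_integral_filter_of_dominated_convergence
      (fun _ => Dα * C) ?_ ?_ (by simp) ?_
    · exact Eventually.of_forall fun k =>
        ((hα.continuous.comp (hEc k 0 h0T)).mul (hφc 0)).aestronglyMeasurable
    · refine Eventually.of_forall fun k => ae_of_all _ fun x _ => ?_
      rw [Real.norm_eq_abs, abs_mul]
      exact mul_le_mul (hDα _ (hEM k 0 h0T x)) (hC 0 x).1 (abs_nonneg _) hDα0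
    · refine ae_of_all _ fun x _ => Tendsto.mul_const _ ?_
      refine (hα.continuous.tendsto _).comp ?_
      simp only [hq0]
      exact (cv_ek_tendsto (hq0 0 ▸ hqt 0 0) (M := M) (fun x => hq0 0 ▸ hqb 0 0 h0T x) x).comp
        (K.nu_tendsto.comp hη)
  -- the defect of the approximate inequality vanishes in the limit
  set B' := max B 0 with hB'
  have hB'0 : 0 ≤ B' := le_max_right _ _
  have hν0 : Tendsto (fun k => K.nu (η k)) atTop (𝓝 0) :=
    (tendsto_nhdsWithin_iff.1 (K.nu_tendsto.comp hη)).1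
  have herr : Tendsto (fun k => -(T * (C * LH * K.nu (η k) * (B' + M)
      + (L * M * (2 * M * (∫ z in Ioi δ₀, |K.γη (η k) z - ek (K.nu (η k)) z|)
        + B' * ((1/K.nu (η k)) * ∫ z in Ioc 0 δ₀,
          |K.γη (η k) z - ek (K.nu (η k)) z| * (z + K.nu (η k))))) *
        (2 * a * C * A1 + C * A2 * B')))) atTop (𝓝 0) := by
    have t1 := (hν0.const_mul (C * LH)).mul_const (B' + M)
    have t2 := (((hρ.comp hη).const_mul (2 * M)).add ((hτ.comp hη).const_mul B')).const_mul (L * M)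
    have t3 := ((t1.add (t2.mul_const (2 * a * C * A1 + C * A2 * B'))).const_mul T).neg
    simpa [Function.comp_def] using t3
  refine le_of_tendsto_of_tendsto herr (hlim1.add hlim2) ?_
  have hη1 : ∀ᶠ k in atTop, η k ≤ 1 := hη0.eventually (Iic_mem_nhds one_pos)
  filter_upwards [hη1, hη.eventually K.γη_integral] with k hk1 hkint
  obtain ⟨⟨G, hG⟩, hbv⟩ := K.γη_bounded_bv (hηpos k) hk1
  exact weak_nonlocal (hνpos k) (K.γη_integrable (hηpos k) hk1)
    (fun z hz => K.γη_nonneg _ (le_of_lt hz)) hkint hG hbv hδ₀ le_rfl le_rfl hV hV' hT hB'0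
    (hsmooth k) (hqM k) (hPDE k)
    (fun t ht => (hTV k t ht).trans (ENNReal.ofReal_le_ofReal (le_max_left _ _)))
    hα hαc hβ hβd hA1 hA2 hLH hL0 hL hφ.continuous hφtc hφxc hφt hφx (hφT T le_rfl) hφ0
    (fun t x => (le_abs_self _).trans (hC t x).1) (fun t x => (hC t x).2.2) ha
    (fun t => (hφa t a (le_abs_self a)).1)
    (fun t => (hφa t (-a) (by rw [abs_neg]; exact le_abs_self a)).1)
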